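/- Let p and q be positive integers and let τ be a permutation of [p+q] which is (p,q)-connected. Then #(τ) + #(τ⁻¹γ) ≤ p+q, and τ belongs to S_ann-nc(p,q) if and only if #(τ) + #(τ⁻¹γ) = p+q. -/

import Mathlib

/-- The permutation induced by `f` on the subset `B`: an element `b` is sent to the first
element of the sequence `f b, f (f b), f (f (f b)), ...` that lies in `B`
(and is left fixed if no iterate ever returns to `B`). -/
noncomputable def induced {α : Type*} (f : α → α) (B : Set α) (b : α) : α := by
  classical
  exact if h : ∃ k, 0 < k ∧ f^[k] b ∈ B then f^[Nat.find h] b else b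

/-- `A` is an orbit of the permutation `τ`. -/
def IsOrbit {α : Type*} (τ : Equiv.Perm α) (A : Set α) : Prop :=
  ∃ a, A = {b | τ.SameCycle a b}

/-- The number of orbits of `τ` (fixed points count as orbits). -/
noncomputable def numOrbits {α : Type*} (τ : Equiv.Perm α) : ℕ :=
  Set.ncard {A : Set α | IsOrbit τ A}

/-- `induced f S` acts on `a, b, c` as the 3-cycle `(a, b, c)`. -/
def MapsCyc3 {α : Type*} (f : α → α) (S : Set α) (a b c : α) : Prop :=
  induced f S a = b ∧ induced f S b = c ∧ induced f S c = a

/-- `induced f S` acts on `a, b, c, d` as the 4-cycle `(a, b, c, d)`. -/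
def MapsCyc4 {α : Type*} (f : α → α) (S : Set α) (a b c d : α) : Prop :=
  induced f S a = b ∧ induced f S b = c ∧ induced f S c = d ∧ induced f S d = a

/-- `induced f S` acts on `a, b, c, d` as the product of transpositions `(a, c)(b, d)`. -/
def MapsSwap2 {α : Type*} (f : α → α) (S : Set α) (a b c d : α) : Prop :=
  induced f S a = c ∧ induced f S c = a ∧ induced f S b = d ∧ induced f S d = b

/-- `induced f S` acts on `x, y` as the transposition `(x, y)`. -/
def MapsSwap {α : Type*} (f : α → α) (S : Set α) (x y : α) : Prop :=
  induced f S x = y ∧ induced f S y = x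

/-- `σ` is standard with respect to the "forward cycle" `γ₀`, i.e. `σ∣B = γ₀∣B` for
every orbit `B` of `σ`. -/
def DiscStandardRel {n : ℕ} (γ₀ σ : Equiv.Perm (Fin n)) : Prop :=
  ∀ A : Set (Fin n), IsOrbit σ A → ∀ b ∈ A, induced (⇑σ) A b = induced (⇑γ₀) A b

/-- The orbit partition of `σ` has no crossing: there are no `a < b < c < d` with
`a, c` in one orbit and `b, d` in a different orbit. -/
def OrbitsNoCrossing {n : ℕ} (σ : Equiv.Perm (Fin n)) : Prop :=
  ¬ ∃ a b c d : Fin n, a < b ∧ b < c ∧ c < d ∧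
      σ.SameCycle a c ∧ σ.SameCycle b d ∧ ¬ σ.SameCycle a b

/-- Disc non-crossing relative to a given forward cycle `γ₀`. -/
def DiscNCRel {n : ℕ} (γ₀ σ : Equiv.Perm (Fin n)) : Prop :=
  DiscStandardRel γ₀ σ ∧ OrbitsNoCrossing σ

/-- The set `S_disc-nc(n)` of disc non-crossing permutations of `[n]`
(here `[n] = {1, …, n}` is modelled by `Fin n`, and the forward cycle
`γ₀ = (1, 2, …, n)` is `finRotate n`). -/
def DiscNC {n : ℕ} (σ : Equiv.Perm (Fin n)) : Prop :=
  DiscNCRel (finRotate n) σ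

/-- The external points `{1, …, p}` (0-indexed: values `< p`). -/
def extSet (p q : ℕ) : Set (Fin (p + q)) := {i | (i : ℕ) < p}

/-- The internal points `{p+1, …, p+q}` (0-indexed: values `≥ p`). -/
def intSet (p q : ℕ) : Set (Fin (p + q)) := {i | p ≤ (i : ℕ)}

/-- `γ_ext = (1, 2, …, p)`, the forward cycle on the external points. -/
def gammaExt (p q : ℕ) : Equiv.Perm (Fin (p + q)) :=
  ((List.finRange (p + q)).take p).formPerm

/-- `γ_int = (p+1, p+2, …, p+q)`, the forward cycle on the internal points. -/
def gammaInt (p q : ℕ) : Equiv.Perm (Fin (p + q)) :=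
  ((List.finRange (p + q)).drop p).formPerm

/-- `γ = γ_ext · γ_int`. -/
def gammaAnn (p q : ℕ) : Equiv.Perm (Fin (p + q)) := gammaExt p q * gammaInt p q

/-- `λ_{x,y}`: the permutation fixing `x` and `y` and cycling the remaining points as
`(γ_ext(x), γ_ext²(x), …, γ_ext^{p-1}(x), γ_int(y), γ_int²(y), …, γ_int^{q-1}(y))`. -/
def lamPerm (p q : ℕ) (x y : Fin (p + q)) : Equiv.Perm (Fin (p + q)) :=
  (((List.range (p - 1)).map fun k => (gammaExt p q ^ (k + 1)) x) ++
    ((List.range (q - 1)).map fun k => (gammaInt p q ^ (k + 1)) y)).formPerm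

/-- `τ` is standard in `(p,q)`-annular sense. -/
def AnnStandard (p q : ℕ) (τ : Equiv.Perm (Fin (p + q))) : Prop :=
  (∀ A : Set (Fin (p + q)), IsOrbit τ A →
    (∀ b ∈ A ∩ extSet p q,
        induced (⇑τ) (A ∩ extSet p q) b = induced (⇑(gammaExt p q)) (A ∩ extSet p q) b) ∧
    (∀ b ∈ A ∩ intSet p q,
        induced (⇑τ) (A ∩ intSet p q) b = induced (⇑(gammaInt p q)) (A ∩ intSet p q) b)) ∧
  (∀ A : Set (Fin (p + q)), IsOrbit τ A →
    (A ∩ extSet p q).Nonempty → (A ∩ intSet p q).Nonempty →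
    (∃! a, a ∈ A ∩ extSet p q ∧ τ a ∈ intSet p q) ∧
    (∃! a, a ∈ A ∩ intSet p q ∧ τ a ∈ extSet p q))

/-- The annular crossing pattern (AC-1). -/
def AC1 (p q : ℕ) (τ : Equiv.Perm (Fin (p + q))) : Prop :=
  ∃ a b c d : Fin (p + q), List.Pairwise (· ≠ ·) [a, b, c, d] ∧
    MapsCyc4 (⇑(gammaAnn p q)) {a, b, c, d} a b c d ∧
    MapsSwap2 (⇑τ) {a, b, c, d} a b c d

/-- The annular crossing pattern (AC-2). -/
def AC2 (p q : ℕ) (τ : Equiv.Perm (Fin (p + q))) : Prop :=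
  ∃ a b c x y : Fin (p + q), List.Pairwise (· ≠ ·) [a, b, c, x, y] ∧
    x ∈ extSet p q ∧ y ∈ intSet p q ∧
    MapsCyc3 (⇑(lamPerm p q x y)) {a, b, c} a b c ∧
    MapsCyc3 (⇑τ) {a, b, c, x, y} a c b ∧
    MapsSwap (⇑τ) {a, b, c, x, y} x y

/-- The annular crossing pattern (AC-3). -/
def AC3 (p q : ℕ) (τ : Equiv.Perm (Fin (p + q))) : Prop :=
  ∃ a b c d x y : Fin (p + q), List.Pairwise (· ≠ ·) [a, b, c, d, x, y] ∧
    x ∈ extSet p q ∧ y ∈ intSet p q ∧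
    MapsCyc4 (⇑(lamPerm p q x y)) {a, b, c, d} a b c d ∧
    MapsSwap2 (⇑τ) {a, b, c, d, x, y} a b c d ∧
    MapsSwap (⇑τ) {a, b, c, d, x, y} x y

/-- The set `S_ann-nc(p,q)` of `(p,q)`-annular non-crossing permutations. -/
def AnnNC (p q : ℕ) (τ : Equiv.Perm (Fin (p + q))) : Prop :=
  AnnStandard p q τ ∧ ¬ AC1 p q τ ∧ ¬ AC2 p q τ ∧ ¬ AC3 p q τ

/-- A `(p,q)`-connecting set: meets both the external and internal points. -/
def ConnectingBlock (p q : ℕ) (B : Set (Fin (p + q))) : Prop :=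
  (B ∩ extSet p q).Nonempty ∧ (B ∩ intSet p q).Nonempty

/-- `τ` is `(p,q)`-connected: it has a `(p,q)`-connecting orbit. -/
def AnnConnected (p q : ℕ) (τ : Equiv.Perm (Fin (p + q))) : Prop :=
  ∃ A : Set (Fin (p + q)), IsOrbit τ A ∧ ConnectingBlock p q A

/-- A family of blocks has no crossing: no `a < b < c < d` with `a, c` in one block and
`b, d` in a different block. -/
def NoCrossing {n : ℕ} (ρ : Set (Set (Fin n))) : Prop :=
  ¬ ∃ (a b c d : Fin n) (B C : Set (Fin n)), B ∈ ρ ∧ C ∈ ρ ∧ B ≠ C ∧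
      a < b ∧ b < c ∧ c < d ∧ a ∈ B ∧ c ∈ B ∧ b ∈ C ∧ d ∈ C

open Equiv Equiv.Perm in
theorem swap_join {α : Type*} [Fintype α] [DecidableEq α] (σ : Perm α) (u v : α)
    (h : ¬ σ.SameCycle u v) : (σ * swap u v).SameCycle u v := by
  have hper : ∃ k, 0 < k ∧ (σ ^ k) v = v :=
    ⟨orderOf σ, orderOf_pos σ, by simp [pow_orderOf_eq_one]⟩
  classical
  obtain ⟨hk0, hk⟩ := Nat.find_spec hper
  have hmin : ∀ m, m < Nat.find hper → ¬ (0 < m ∧ (σ ^ m) v = v) :=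
    fun m hm => Nat.find_min hper hm
  generalize Nat.find hper = k at hk0 hk hmin
  have key : ∀ i, i < k → ((σ * swap u v) ^ (i+1)) u = (σ ^ (i+1)) v := by
    intro i
    induction i with
    | zero => intro _; simp
    | succ i ih =>
      intro hi
      rw [pow_succ' _ (i+1), Perm.mul_apply, ih (by omega), pow_succ' σ (i+1), Perm.mul_apply,
        Perm.mul_apply]
      congr 1
      apply swap_apply_of_ne_of_ne
      · intro h2
        exact h (SameCycle.symm ⟨(i+1 : ℕ), by rw [zpow_natCast]; exact h2⟩)
      · intro h2
        exact hmin (i+1) hi ⟨by omega, h2⟩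
  refine ⟨(k : ℕ), ?_⟩
  rw [zpow_natCast]
  obtain ⟨m, rfl⟩ : ∃ m, k = m + 1 := ⟨k - 1, by omega⟩
  rw [key m (by omega), hk]

open Equiv Equiv.Perm in
theorem sameCycle_of_step {α : Type*} [Finite α] (σ : Perm α) (P : α → Prop)
    (h : ∀ a, P a → P (σ a)) {a b : α} (hab : σ.SameCycle a b) (ha : P a) : P b := by
  obtain ⟨i, -, hi⟩ := hab.exists_pow_eq'
  clear hab
  subst hi
  induction i with
  | zero => simpa using ha
  | succ i ih => rw [pow_succ', Perm.mul_apply]; exact h _ ih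

open Equiv Equiv.Perm in
theorem swap_sameCycle_iff {α : Type*} [Fintype α] [DecidableEq α] (σ : Perm α) (u v : α)
    (h : ¬ σ.SameCycle u v) (a b : α) : (σ * swap u v).SameCycle a b ↔
      σ.SameCycle a b ∨ ((σ.SameCycle u a ∨ σ.SameCycle v a) ∧
        (σ.SameCycle u b ∨ σ.SameCycle v b)) := by
  have hj := swap_join σ u v h
  constructor
  · intro hab
    refine sameCycle_of_step (σ * swap u v) (fun b => σ.SameCycle a b ∨
      ((σ.SameCycle u a ∨ σ.SameCycle v a) ∧ (σ.SameCycle u b ∨ σ.SameCycle v b))) ?_ hab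
      (Or.inl (SameCycle.refl _ _))
    intro b hb
    by_cases h1 : b = u
    · subst h1
      simp only [Perm.mul_apply, swap_apply_left, sameCycle_apply_right]
      have := SameCycle.refl σ b
      have := SameCycle.refl σ v
      rcases hb with hb | hb
      · exact Or.inr ⟨Or.inl hb.symm, Or.inr this⟩
      · exact Or.inr ⟨hb.1, Or.inr this⟩
    by_cases h2 : b = v
    · subst h2
      simp only [Perm.mul_apply, swap_apply_right, sameCycle_apply_right]
      have := SameCycle.refl σ u
      rcases hb with hb | hb
      · exact Or.inr ⟨Or.inr hb.symm, Or.inl this⟩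
      · exact Or.inr ⟨hb.1, Or.inl this⟩
    · simpa only [Perm.mul_apply, swap_apply_of_ne_of_ne h1 h2, sameCycle_apply_right] using hb
  · have step : ∀ a b, σ.SameCycle a b → (σ * swap u v).SameCycle a b := by
      intro a b hab
      refine sameCycle_of_step σ _ ?_ hab (SameCycle.refl _ _)
      intro c hc
      refine hc.trans ?_
      by_cases h1 : c = u
      · subst h1
        refine hj.trans ⟨1, ?_⟩
        simp
      by_cases h2 : c = v
      · subst h2
        refine hj.symm.trans ⟨1, ?_⟩
        simp
      · refine ⟨1, ?_⟩
        simp [swap_apply_of_ne_of_ne h1 h2]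
    rintro (hab | ⟨h1, h2⟩)
    · exact step _ _ hab
    · have h1' : (σ * swap u v).SameCycle u a := by
        rcases h1 with h1 | h1
        · exact step _ _ h1
        · exact hj.trans (step _ _ h1)
      have h2' : (σ * swap u v).SameCycle u b := by
        rcases h2 with h1 | h1
        · exact step _ _ h1
        · exact hj.trans (step _ _ h1)
      exact h1'.symm.trans h2'

open Equiv Equiv.Perm in
theorem numOrbits_merge {α : Type*} [Fintype α] [DecidableEq α] (σ : Perm α) (u v : α)
    (h : ¬ σ.SameCycle u v) : numOrbits (σ * swap u v) + 1 = numOrbits σ := by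
  have key := swap_sameCycle_iff σ u v h
  set U : Set α := {b | σ.SameCycle u b} with hU
  set V : Set α := {b | σ.SameCycle v b} with hV
  have huU : u ∈ U := SameCycle.refl _ _
  have hvV : v ∈ V := SameCycle.refl _ _
  set O : Set (Set α) := {A | IsOrbit σ A} with hO
  have hUV : U ≠ V := by
    intro e
    have : v ∈ U := e ▸ hvV
    exact h this
  have e : {A | IsOrbit (σ * swap u v) A} = insert (U ∪ V) ((O \ {U}) \ {V}) := by
    ext A
    simp only [Set.mem_ofPred_eq, Set.mem_insert_iff, Set.mem_sdiff, Set.mem_singleton_iff]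
    constructor
    · rintro ⟨a, rfl⟩
      by_cases ha : σ.SameCycle u a ∨ σ.SameCycle v a
      · left
        ext b
        simp only [Set.mem_ofPred_eq, key, Set.mem_union, hU, hV]
        constructor
        · rintro (hb | hb)
          · rcases ha with ha | ha
            · exact Or.inl (ha.trans hb)
            · exact Or.inr (ha.trans hb)
          · exact hb.2
        · intro hb; exact Or.inr ⟨ha, hb⟩
      · right
        have : {b | (σ * swap u v).SameCycle a b} = {b | σ.SameCycle a b} := by
          ext b
          simp only [Set.mem_ofPred_eq, key]
          tauto
        rw [this]
        refine ⟨⟨⟨a, rfl⟩, ?_⟩, ?_⟩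
        · intro e
          have : a ∈ U := e ▸ SameCycle.refl _ _
          exact ha (Or.inl this)
        · intro e
          have : a ∈ V := e ▸ SameCycle.refl _ _
          exact ha (Or.inr this)
    · rintro (rfl | ⟨⟨⟨a, rfl⟩, h1⟩, h2⟩)
      · refine ⟨u, ?_⟩
        ext b
        simp only [Set.mem_ofPred_eq, key, Set.mem_union, hU, hV]
        constructor
        · intro hb; exact Or.inr ⟨Or.inl huU, hb⟩
        · rintro (hb | hb)
          · exact Or.inl hb
          · exact hb.2
      · refine ⟨a, ?_⟩
        have ha : ¬ (σ.SameCycle u a ∨ σ.SameCycle v a) := by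
          rintro (ha | ha)
          · apply h1; ext b; exact ⟨fun hb => ha.trans hb, fun hb => ha.symm.trans hb⟩
          · apply h2; ext b; exact ⟨fun hb => ha.trans hb, fun hb => ha.symm.trans hb⟩
        ext b
        simp only [Set.mem_ofPred_eq, key]
        tauto
  have hn : U ∪ V ∉ (O \ {U}) \ {V} := by
    rintro ⟨⟨⟨a, ha⟩, -⟩, -⟩
    have h1 : u ∈ {b | σ.SameCycle a b} := ha ▸ Or.inl huU
    have h2 : v ∈ {b | σ.SameCycle a b} := ha ▸ Or.inr hvV
    exact h (SameCycle.trans (SameCycle.symm h1) h2)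
  change Set.ncard {A | IsOrbit (σ * swap u v) A} + 1 = O.ncard
  rw [e, Set.ncard_insert_of_notMem hn (Set.toFinite _)]
  have hU' : U ∈ O := ⟨u, rfl⟩
  have hV' : V ∈ O \ {U} := ⟨⟨v, rfl⟩, fun h => hUV h.symm⟩
  have := Set.ncard_sdiff_singleton_add_one hV' (Set.toFinite _)
  have := Set.ncard_sdiff_singleton_add_one hU' (Set.toFinite _)
  omega

open Equiv Equiv.Perm in
theorem swap_split {α : Type*} [Fintype α] [DecidableEq α] (σ : Perm α) (u v : α)
    (h : σ.SameCycle u v) (hne : u ≠ v) : ¬ (σ * swap u v).SameCycle u v := by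
  classical
  have hex : ∃ k : ℕ, (σ ^ k) u = v := by
    obtain ⟨i, -, hi⟩ := h.exists_pow_eq'
    exact ⟨i, hi⟩
  have hk := Nat.find_spec hex
  have hmin : ∀ m, m < Nat.find hex → ¬ ((σ ^ m) u = v) :=
    fun m hm => Nat.find_min hex hm
  generalize Nat.find hex = k at hk hmin
  have hk0 : 0 < k := by
    rcases Nat.eq_zero_or_pos k with rfl | h0
    · simp at hk; exact absurd hk hne
    · exact h0
  intro hc
  obtain ⟨i, hi1, hi2, hi⟩ : ∃ i, 0 < i ∧ i ≤ k ∧ (σ ^ i) u = u := by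
    refine sameCycle_of_step (σ * swap u v) (fun a => ∃ i, 0 < i ∧ i ≤ k ∧ (σ ^ i) u = a) ?_
      hc.symm ⟨k, hk0, le_refl _, hk⟩
    rintro a ⟨i, h1, h2, rfl⟩
    by_cases hik : i = k
    · subst hik
      refine ⟨1, one_pos, hk0, ?_⟩
      simp [hk]
    · have n1 : (σ ^ i) u ≠ v := hmin i (by omega)
      have n2 : (σ ^ i) u ≠ u := by
        intro e
        apply hmin (k - i) (by omega)
        rw [← hk]
        conv_rhs => rw [show k = (k - i) + i by omega, pow_add, Perm.mul_apply, e]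
      refine ⟨i + 1, by omega, by omega, ?_⟩
      rw [Perm.mul_apply, swap_apply_of_ne_of_ne n2 n1, pow_succ', Perm.mul_apply]
  have : i ≠ k := by rintro rfl; exact hne (hi.symm.trans hk)
  apply hmin (k - i) (by omega)
  rw [← hk]
  conv_rhs => rw [show k = (k - i) + i by omega, pow_add, Perm.mul_apply, hi]

open Equiv Equiv.Perm in
theorem numOrbits_split {α : Type*} [Fintype α] [DecidableEq α] (σ : Perm α) (u v : α)
    (h : ¬ (σ * swap u v).SameCycle u v) : numOrbits (σ * swap u v) = numOrbits σ + 1 := by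
  have := numOrbits_merge (σ * swap u v) u v h
  rw [mul_assoc, swap_mul_self, mul_one] at this
  exact this.symm

theorem numOrbits_one {α : Type*} [Fintype α] :
    numOrbits (1 : Equiv.Perm α) = Fintype.card α := by
  unfold numOrbits
  have : {A : Set α | IsOrbit (1 : Equiv.Perm α) A} = Set.range (fun a : α => ({a} : Set α)) := by
    ext A
    simp only [Set.mem_ofPred_eq, Set.mem_range, IsOrbit, Equiv.Perm.sameCycle_one]
    constructor
    · rintro ⟨a, rfl⟩
      exact ⟨a, by ext b; simp [eq_comm]⟩
    · rintro ⟨a, rfl⟩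
      exact ⟨a, by ext b; simp [eq_comm]⟩
  rw [this, ← Set.image_univ, Set.ncard_image_of_injective _ Set.singleton_injective,
    Set.ncard_univ, Nat.card_eq_fintype_card]

open Equiv Equiv.Perm in
theorem not_sameCycle_of_fixed {α : Type*} [Finite α] (σ : Perm α) {x z : α} (h : σ x = x)
    (hne : z ≠ x) : ¬ σ.SameCycle x z := by
  intro hc
  apply hne
  exact sameCycle_of_step σ (fun a => a = x) (by rintro a rfl; exact h) hc rfl

open Equiv Equiv.Perm in
/-- Cutting `γ` along the arrow `x → τ x` splits off a fixed point of `τ⁻¹ γ`. -/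
theorem numOrbits_cut {α : Type*} [Fintype α] [DecidableEq α] (τ γ : Perm α) (x : α)
    (h : τ x ≠ γ x) : numOrbits (τ⁻¹ * (γ * swap x (γ⁻¹ (τ x)))) = numOrbits (τ⁻¹ * γ) + 1 := by
  rw [← mul_assoc]
  apply numOrbits_split
  apply not_sameCycle_of_fixed
  · simp
  · intro e
    apply h
    rw [Perm.inv_eq_iff_eq] at e
    exact e

open Equiv Equiv.Perm in
theorem genus_ineq {α : Type*} [Fintype α] [DecidableEq α] (τ : Perm α) : ∀ (N : ℕ) (γ : Perm α),
    (Finset.univ.filter (fun x => τ x ≠ γ x)).card = N →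
    numOrbits τ + numOrbits (τ⁻¹ * γ) ≤ Fintype.card α + numOrbits γ ∧
    ((∃ x, ¬ γ.SameCycle x (τ x)) →
      numOrbits τ + numOrbits (τ⁻¹ * γ) + 2 ≤ Fintype.card α + numOrbits γ) := by
  intro N
  induction N using Nat.strong_induction_on with
  | _ N ih =>
  intro γ hN
  have dec : ∀ x, τ x ≠ γ x → (Finset.univ.filter
      (fun y => τ y ≠ (γ * swap x (γ⁻¹ (τ x))) y)).card < N := by
    intro x hx
    rw [← hN]
    apply Finset.card_lt_card
    rw [Finset.ssubset_iff_of_subset]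
    · refine ⟨x, by simpa using hx, ?_⟩
      rw [Finset.mem_filter]
      simp
    · intro y
      simp only [Finset.mem_filter, Finset.mem_univ, true_and]
      intro hy e
      apply hy
      rw [Perm.mul_apply, swap_apply_of_ne_of_ne, e]
      · rintro rfl; exact hx e
      · intro h2
        have : γ y = τ x := by rw [h2]; simp
        rw [← e] at this
        have := τ.injective this
        subst this
        exact hx e
  by_cases hb : ∃ x, ¬ γ.SameCycle x (τ x)
  · obtain ⟨x, hx⟩ := hb
    have hne : τ x ≠ γ x := by
      intro e; apply hx; rw [e]; exact ⟨1, by simp⟩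
    have h1 := (ih _ (dec x hne) _ rfl).1
    rw [numOrbits_cut τ γ x hne] at h1
    have h2 := numOrbits_merge γ x (γ⁻¹ (τ x)) (by simpa using hx)
    constructor
    · omega
    · intro _; omega
  · refine ⟨?_, fun h => absurd h hb⟩
    push Not at hb
    by_cases he : τ = γ
    · subst he
      rw [inv_mul_cancel, numOrbits_one]; omega
    · obtain ⟨x, hx⟩ : ∃ x, τ x ≠ γ x := by
        by_contra hcon
        push Not at hcon
        exact he (Equiv.ext hcon)
      have h1 := (ih _ (dec x hx) _ rfl).1
      rw [numOrbits_cut τ γ x hx] at h1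
      have hne : x ≠ γ⁻¹ (τ x) := by
        intro e; apply hx
        nth_rewrite 2 [e]; simp
      have h2 := numOrbits_split γ x (γ⁻¹ (τ x)) (swap_split _ _ _ (by simpa using hb x) hne)
      omega

/-- `w` lies in the open cyclic interval from `z` to `y` (w.r.t. positions `pos`). -/
def CI {α : Type*} (pos : α → ℕ) (z y w : α) : Prop :=
  (pos z < pos w ∧ pos w < pos y) ∨ (pos y < pos z ∧ (pos z < pos w ∨ pos w < pos y))

/-- Each cyclic interval `(z, τ z)` is invariant under `τ`. -/
def NCs {α : Type*} (pos : α → ℕ) (τ : Equiv.Perm α) : Prop :=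
  ∀ z w, CI pos z (τ z) w → CI pos z (τ z) (τ w)

/-- `c` is the full rotation w.r.t. positions `pos`. -/
def IsRot {α : Type*} (n : ℕ) (pos : α → ℕ) (c : Equiv.Perm α) : Prop :=
  ∀ z, (pos z + 1 = n ∧ pos (c z) = 0) ∨ (pos z + 1 < n ∧ pos (c z) = pos z + 1)

theorem perm_inv_of_step {α : Type*} [Finite α] (σ : Equiv.Perm α) (P : α → Prop)
    (h : ∀ a, P a → P (σ a)) (a : α) : P (σ a) ↔ P a := by
  refine ⟨fun ha => ?_, h a⟩
  exact sameCycle_of_step σ P h (a := σ a) (b := a) ⟨-1, by simp⟩ ha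

theorem perm_iff_of_step {α : Type*} [Finite α] (σ : Equiv.Perm α) (P : α → Prop)
    (h : ∀ a, P a → P (σ a)) {a b : α} (hab : σ.SameCycle a b) : P a ↔ P b :=
  ⟨sameCycle_of_step σ P h hab, sameCycle_of_step σ P h hab.symm⟩

theorem isRot_sameCycle {α : Type*} [Finite α] {n : ℕ} {pos : α → ℕ} {c : Equiv.Perm α}
    (hinj : Function.Injective pos) (hc : IsRot n pos c) (a b : α) : c.SameCycle a b := by
  have key : ∀ k a b, pos a = k → pos b = 0 → c.SameCycle a b := by
    intro k
    induction k with
    | zero => intro a b ha hb; rw [hinj (ha.trans hb.symm)]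
    | succ k ih =>
      intro a b ha hb
      have h := hc (c⁻¹ a)
      rw [show ∀ v, c (c⁻¹ v) = v by simp] at h
      have := ih (c⁻¹ a) b (by omega) hb
      exact Equiv.Perm.SameCycle.trans ⟨-1, by simp⟩ this
  have h0 : ∃ z, pos z = 0 := by
    by_contra hcon
    push Not at hcon
    have : ∀ k, ∀ z : α, pos z = k → False := by
      intro k
      induction k with
      | zero => intro z hz; exact hcon z hz
      | succ k ih =>
        intro z hz
        have h := hc (c⁻¹ z)
        rw [show ∀ v, c (c⁻¹ v) = v by simp] at h
        exact ih (c⁻¹ z) (by omega)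
    exact this _ a rfl
  obtain ⟨z, hz⟩ := h0
  exact (key _ a z rfl hz).trans (key _ b z rfl hz).symm

theorem isRot_numOrbits {α : Type*} [Finite α] [Nonempty α] {n : ℕ} {pos : α → ℕ}
    {c : Equiv.Perm α} (hinj : Function.Injective pos) (hc : IsRot n pos c) : numOrbits c = 1 := by
  unfold numOrbits
  rw [Set.ncard_eq_one]
  refine ⟨Set.univ, ?_⟩
  ext A
  simp only [Set.mem_ofPred_eq, Set.mem_singleton_iff, IsOrbit, isRot_sameCycle hinj hc]
  constructor
  · rintro ⟨a, rfl⟩; ext; simp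
  · rintro rfl; exact ⟨Classical.arbitrary α, by ext; simp⟩

open Equiv Equiv.Perm in
theorem disc_ncs_of_eq {α : Type*} [Fintype α] [DecidableEq α] [Nonempty α] {pos : α → ℕ}
    {c : Perm α} (hinj : Function.Injective pos) (hc : IsRot (Fintype.card α) pos c)
    (τ : Perm α) (h : numOrbits τ + numOrbits (τ⁻¹ * c) = Fintype.card α + 1) : NCs pos τ := by
  intro z w hzw
  have hne : τ z ≠ c z := by
    intro e
    rw [e] at hzw
    unfold CI at hzw
    have := hc z
    have := hc w
    omega
  have hcut := numOrbits_cut τ c z hne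
  set u := c⁻¹ (τ z) with hu
  have hcu : c u = τ z := by simp [hu]
  have hinv : ∀ a, CI pos z (τ z) a → CI pos z (τ z) ((c * swap z u) a) := by
    intro a ha
    by_cases h1 : a = z
    · subst h1; unfold CI at ha; omega
    by_cases h2 : a = u
    · subst h2
      rw [Perm.mul_apply, swap_apply_right]
      rw [← hcu] at ha hne ⊢
      have hz := hc z
      have ha' := hc u
      have : pos (c u) ≠ pos (c z) := fun e => hne (hinj e)
      unfold CI at ha ⊢
      omega
    · rw [Perm.mul_apply, swap_apply_of_ne_of_ne h1 h2]
      have : pos (c a) ≠ pos (τ z) := by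
        intro e
        rw [← hcu] at e
        exact h2 (c.injective (hinj e))
      have h5 := hc a
      have h6 := hc z
      have h7 := hc u
      rw [hcu] at h7
      unfold CI at ha ⊢
      omega
  have hsplit : ¬ (c * swap z u).SameCycle z u := by
    intro hs
    have := sameCycle_of_step _ _ hinv hs.symm ?_
    · unfold CI at this; omega
    · have h6 := hc z
      have h7 := hc u
      rw [hcu] at h7
      have h8 : pos (τ z) ≠ pos (c z) := fun e => hne (hinj e)
      unfold CI at hzw ⊢
      omega
  have h1 := numOrbits_split c z u hsplit
  rw [isRot_numOrbits hinj hc] at h1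
  have h2 := (genus_ineq τ _ (c * swap z u) rfl).2
  by_contra hcon
  have := h2 ⟨w, fun hs => hcon (sameCycle_of_step _ _ hinv hs hzw)⟩
  omega

open Equiv Equiv.Perm in
theorem disc_eq_of_ncs {α : Type*} [Fintype α] [DecidableEq α] [Nonempty α] {pos : α → ℕ}
    {c : Perm α} (hinj : Function.Injective pos) (hc : IsRot (Fintype.card α) pos c) :
    ∀ (N : ℕ) (τ : Perm α), (Finset.univ.filter (fun x => τ x ≠ x)).card = N → NCs pos τ →
    numOrbits τ + numOrbits (τ⁻¹ * c) = Fintype.card α + 1 := by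
  intro N
  induction N using Nat.strong_induction_on with
  | _ N ih =>
  intro τ hN hτ
  by_cases h1 : τ = 1
  · subst h1
    rw [numOrbits_one, inv_one, one_mul, isRot_numOrbits hinj hc]
  obtain ⟨z, hz⟩ : ∃ z, τ z ≠ z := by
    by_contra hcon
    push Not at hcon
    exact h1 (Equiv.ext hcon)
  set τ' := τ * swap z (τ z) with hτ'
  have e1 : τ' (τ z) = τ z := by simp [hτ']
  have e2 : τ' z = τ (τ z) := by simp [hτ']
  have e3 : ∀ w, w ≠ z → w ≠ τ z → τ' w = τ w := by
    intro w h1 h2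
    rw [hτ', Perm.mul_apply, swap_apply_of_ne_of_ne h1 h2]
  have hinvt : ∀ P : α → Prop, (∀ a, P a → P (τ a)) → ∀ a, P a → P (τ' a) := by
    intro P hP a ha
    by_cases h1 : a = z
    · subst h1; rw [e2]; exact hP _ (hP _ ha)
    by_cases h2 : a = τ z
    · subst h2; rw [e1]; exact ha
    · rw [e3 a h1 h2]; exact hP _ ha
  have hpz : pos (τ z) ≠ pos z := fun e => hz (hinj e)
  -- the smaller permutation is non-crossing
  have hnc : NCs pos τ' := by
    intro w u hu
    by_cases h2 : w = τ z
    · subst h2; rw [e1] at hu; unfold CI at hu; omega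
    by_cases h1 : w = z
    · subst h1
      have hA := hinvt _ (hτ w)
      have hB := hinvt _ (hτ (τ w))
      have hA0 := perm_inv_of_step τ _ (hτ w) (τ w)
      have hB0 := hτ (τ w) w
      rw [e2] at hu ⊢
      have hne : pos (τ (τ w)) ≠ pos (τ w) := fun e => hz (τ.injective (hinj e))
      have hsub : CI pos w (τ w) u ∨ u = τ w ∨ CI pos (τ w) (τ (τ w)) u := by
        by_cases hu2 : u = τ w
        · exact Or.inr (Or.inl hu2)
        · have : pos u ≠ pos (τ w) := fun e => hu2 (hinj e)
          unfold CI at hu hA0 hB0 ⊢; omega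
      have back : ∀ v, CI pos w (τ w) v ∨ v = τ w ∨ CI pos (τ w) (τ (τ w)) v →
          CI pos w (τ (τ w)) v := by
        intro v hv
        have hw0 : pos (τ (τ w)) ≠ pos w := by
          intro e
          rw [hinj e] at hu
          unfold CI at hu; omega
        rcases hv with hv | hv | hv
        · unfold CI at hv hA0 hB0 ⊢; omega
        · subst hv; unfold CI at hA0 hB0 ⊢; omega
        · unfold CI at hv hA0 hB0 ⊢; omega
      apply back
      rcases hsub with h | h | h
      · exact Or.inl (hA _ h)
      · subst h; rw [e1]; exact Or.inr (Or.inl rfl)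
      · exact Or.inr (Or.inr (hB _ h))
    · rw [e3 w h1 h2] at hu ⊢
      exact hinvt _ (hτ w) u hu
  -- count
  have hlt : (Finset.univ.filter (fun x => τ' x ≠ x)).card < N := by
    rw [← hN]
    apply Finset.card_lt_card
    rw [Finset.ssubset_iff_of_subset]
    · refine ⟨τ z, by simpa using hz, ?_⟩
      rw [Finset.mem_filter, e1]; simp
    · intro y
      simp only [Finset.mem_filter, Finset.mem_univ, true_and]
      intro hy e
      apply hy
      by_cases h1 : y = z
      · subst h1; exact absurd e hz
      by_cases h2 : y = τ z
      · subst h2; exact e1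
      · rw [e3 y h1 h2, e]
  have hfin := ih _ hlt τ' rfl hnc
  have hs1 : numOrbits τ' = numOrbits τ + 1 := by
    apply numOrbits_split
    intro hs
    exact not_sameCycle_of_fixed τ' e1 (Ne.symm hz) hs.symm
  -- ρ
  set ρ := τ⁻¹ * c with hρ
  have hρτ : ∀ a, τ (ρ a) = c a := by intro a; simp [hρ]
  have hρinv : ∀ a, (a = z ∨ CI pos z (τ z) a) → (ρ a = z ∨ CI pos z (τ z) (ρ a)) := by
    intro a ha
    by_cases hr : ρ a = z
    · exact Or.inl hr
    right
    rw [← perm_inv_of_step τ _ (hτ z) (ρ a), hρτ]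
    have hne : pos (c a) ≠ pos (τ z) := by
      intro e
      rw [← hρτ] at e
      exact hr (τ.injective (hinj e))
    have h3 := hc a
    have h4 := hc z
    have h5 := hc (τ z)
    rcases ha with rfl | ha
    · unfold CI; omega
    · unfold CI at ha ⊢; omega
  have hnsame : ¬ ρ.SameCycle z (τ z) := by
    intro hs
    have := sameCycle_of_step ρ (fun a => a = z ∨ CI pos z (τ z) a) hρinv hs (Or.inl rfl)
    rcases this with h | h
    · exact hz h
    · unfold CI at h; omega
  have hs2 : numOrbits (τ'⁻¹ * c) + 1 = numOrbits ρ := by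
    have h3 : τ'⁻¹ * c = ρ * swap (ρ⁻¹ z) (ρ⁻¹ (τ z)) := by
      rw [hτ', mul_inv_rev, swap_inv, mul_assoc, ← hρ]
      rw [Equiv.swap_apply_apply ρ⁻¹ z (τ z)]
      group
    rw [h3]
    apply numOrbits_merge
    simpa using hnsame
  omega

theorem disc_iff {α : Type*} [Fintype α] [DecidableEq α] [Nonempty α] {pos : α → ℕ}
    {c : Equiv.Perm α} (hinj : Function.Injective pos) (hc : IsRot (Fintype.card α) pos c)
    (τ : Equiv.Perm α) : numOrbits τ + numOrbits (τ⁻¹ * c) ≤ Fintype.card α + 1 ∧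
      (numOrbits τ + numOrbits (τ⁻¹ * c) = Fintype.card α + 1 ↔ NCs pos τ) := by
  refine ⟨?_, disc_ncs_of_eq hinj hc τ, disc_eq_of_ncs hinj hc _ τ rfl⟩
  have := (genus_ineq τ _ c rfl).1
  rwa [isRot_numOrbits hinj hc] at this

/-- `b` is the cyclic successor of `a` inside `S` (w.r.t. positions `pos`). -/
def IsNext {α : Type*} (pos : α → ℕ) (S : Set α) (a b : α) : Prop :=
  b ∈ S ∧ (∀ u ∈ S, ¬ CI pos a b u) ∧ (b = a → ∀ u ∈ S, u = a)

/-- `f` rotates `D` cyclically w.r.t. positions `pos`. -/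
def RotOn {α : Type*} (pos : α → ℕ) (D : Set α) (f : α → α) : Prop :=
  ∀ z ∈ D, IsNext pos D z (f z)

theorem isNext_unique {α : Type*} {pos : α → ℕ} {S : Set α}
    (hinj : Set.InjOn pos S) {a b b' : α} (ha : a ∈ S)
    (h : IsNext pos S a b) (h' : IsNext pos S a b') : b = b' := by
  obtain ⟨h1, h2, h3⟩ := h
  obtain ⟨h1', h2', h3'⟩ := h'
  by_cases e : b = a
  · rw [e, h3 e b' h1']
  by_cases e' : b' = a
  · exact absurd (h3' e' b h1) e
  have g1 := h2 _ h1'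
  have g2 := h2' _ h1
  have n1 : pos b ≠ pos a := fun h => e (hinj h1 ha h)
  have n2 : pos b' ≠ pos a := fun h => e' (hinj h1' ha h)
  apply hinj h1 h1'
  unfold CI at g1 g2
  omega

theorem induced_spec {α : Type*} [Finite α] (f : Equiv.Perm α) (S : Set α) {a : α} (ha : a ∈ S) :
    ∃ k, 0 < k ∧ f^[k] a = induced f S a ∧ f^[k] a ∈ S ∧ ∀ j, 0 < j → j < k → f^[j] a ∉ S := by
  classical
  have hex : ∃ k, 0 < k ∧ f^[k] a ∈ S := by
    refine ⟨orderOf f, orderOf_pos f, ?_⟩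
    rw [← Equiv.Perm.coe_pow, pow_orderOf_eq_one]
    exact ha
  have e : induced f S a = f^[Nat.find hex] a := by
    unfold induced
    rw [dif_pos hex]
  refine ⟨Nat.find hex, (Nat.find_spec hex).1, e.symm, (Nat.find_spec hex).2, ?_⟩
  intro j hj hjk hm
  exact Nat.find_min hex hjk ⟨hj, hm⟩

theorem iterate_mem_rotOn {α : Type*} {pos : α → ℕ} {D : Set α} {f : α → α} (h : RotOn pos D f)
    {a : α} (ha : a ∈ D) (k : ℕ) : f^[k] a ∈ D := by
  induction k with
  | zero => exact ha
  | succ k ih => rw [Function.iterate_succ_apply']; exact (h _ ih).1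

theorem induced_isNext {α : Type*} [Finite α] {pos : α → ℕ} {D : Set α} {f : Equiv.Perm α}
    (hinj : Set.InjOn pos D) (h : RotOn pos D f) (S : Set α) {a : α} (haS : a ∈ S) (haD : a ∈ D) :
    IsNext pos (S ∩ D) a (induced f S a) := by
  obtain ⟨k, hk0, hk, hkS, hmin⟩ := induced_spec f S haS
  rw [← hk]
  have hD := iterate_mem_rotOn h haD
  have key : ∀ j, j < k → ∀ u ∈ S ∩ D, ¬ CI pos a (f^[j+1] a) u := by
    intro j
    induction j with
    | zero =>
      intro _ u hu
      exact (h a haD).2.1 u hu.2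
    | succ j ih =>
      intro hj u hu hc
      have i1 := ih (by omega) u hu
      have i2 := (h _ (hD (j+1))).2.1 u hu.2
      rw [← Function.iterate_succ_apply' f, Nat.succ_eq_add_one] at i2
      have n1 : pos (f^[j+1] a) ≠ pos u := by
        intro e
        apply hmin (j+1) (by omega) hj
        rw [hinj (hD _) hu.2 e]; exact hu.1
      have n2 : pos (f^[j+1] a) ≠ pos a := by
        intro e
        apply hmin (j+1) (by omega) hj
        rw [hinj (hD _) haD e]; exact haS
      unfold CI at hc i1 i2
      omega
  obtain ⟨m, rfl⟩ : ∃ m, k = m + 1 := ⟨k - 1, by omega⟩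
  refine ⟨⟨hkS, hD _⟩, key m (by omega), ?_⟩
  intro he u hu
  rcases Nat.eq_zero_or_pos m with rfl | hm
  · exact (h a haD).2.2 he u hu.2
  · by_contra hne
    have i1 := key (m-1) (by omega) u hu
    rw [show m - 1 + 1 = m by omega] at i1
    have i2 := (h _ (hD m)).2.1 u hu.2
    rw [← Function.iterate_succ_apply' f, Nat.succ_eq_add_one, he] at i2
    have n1 : pos (f^[m] a) ≠ pos u := by
      intro e
      apply hmin m hm (by omega)
      rw [hinj (hD _) hu.2 e]; exact hu.1
    have n2 : pos (f^[m] a) ≠ pos a := by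
      intro e
      apply hmin m hm (by omega)
      rw [hinj (hD _) haD e]; exact haS
    have n3 : pos u ≠ pos a := fun e => hne (hinj hu.2 haD e)
    unfold CI at i1 i2
    omega

theorem induced_eq_of_isNext {α : Type*} [Finite α] {pos : α → ℕ} {D : Set α} {f : Equiv.Perm α}
    (hinj : Set.InjOn pos D) (h : RotOn pos D f) (S : Set α) {a b : α} (haS : a ∈ S) (haD : a ∈ D)
    (hb : IsNext pos (S ∩ D) a b) : induced f S a = b :=
  isNext_unique (hinj.mono Set.inter_subset_right) ⟨haS, haD⟩
    (induced_isNext hinj h S haS haD) hb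

/-- Every orbit has positions for which the permutation is a rotation. -/
theorem exists_pos_orbit {α : Type*} [Finite α] (τ : Equiv.Perm α) (e : α) :
    ∃ pos : α → ℕ, Set.InjOn pos {b | τ.SameCycle e b} ∧ RotOn pos {b | τ.SameCycle e b} τ := by
  classical
  have hex : ∀ u ∈ {b | τ.SameCycle e b}, ∃ i : ℕ, (τ ^ i) e = u := by
    intro u hu
    obtain ⟨i, -, hi⟩ := Equiv.Perm.SameCycle.exists_pow_eq' hu
    exact ⟨i, hi⟩
  set pos : α → ℕ := fun u => sInf {i : ℕ | (τ ^ i) e = u} with hpos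
  have hp : ∀ u ∈ {b | τ.SameCycle e b}, (τ ^ (pos u)) e = u := by
    intro u hu
    exact Nat.sInf_mem (s := {i : ℕ | (τ ^ i) e = u}) (hex u hu)
  have hle : ∀ u i, (τ ^ i) e = u → pos u ≤ i := by
    intro u i hi
    exact Nat.sInf_le (s := {i : ℕ | (τ ^ i) e = u}) hi
  refine ⟨pos, ?_, ?_⟩
  · intro u hu v hv huv
    rw [← hp u hu, huv, hp v hv]
  · intro v hv
    have hτv : τ v ∈ {b | τ.SameCycle e b} := by
      have : τ.SameCycle e v := hv
      simpa using this
    have h1 : (τ ^ (pos v + 1)) e = τ v := by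
      rw [pow_succ', Equiv.Perm.mul_apply, hp v hv]
    have h2 := hle _ _ h1
    refine ⟨hτv, ?_, ?_⟩
    · intro u hu
      rcases Nat.eq_zero_or_pos (pos (τ v)) with h0 | h0
      · have h3 := hp _ hτv
        rw [h0] at h3
        simp only [pow_zero, Equiv.Perm.one_apply] at h3
        rw [← h3] at h1
        have h4 : pos u < pos v + 1 := by
          refine lt_of_le_of_lt (hle u (pos u % (pos v + 1)) ?_) (Nat.mod_lt _ (by omega))
          conv_rhs => rw [← hp u hu, ← Nat.mod_add_div (pos u) (pos v + 1), pow_add,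
            Equiv.Perm.mul_apply, pow_mul]
          congr 1
          have : ∀ m : ℕ, ((τ ^ (pos v + 1)) ^ m) e = e := by
            intro m
            induction m with
            | zero => simp
            | succ m ih => rw [pow_succ', Equiv.Perm.mul_apply, ih, h1]
          rw [this]
        unfold CI; omega
      · have h3 := hp _ hτv
        obtain ⟨k, hk⟩ : ∃ k, pos (τ v) = k + 1 := ⟨pos (τ v) - 1, by omega⟩
        rw [hk, pow_succ', Equiv.Perm.mul_apply] at h3
        have := hle _ _ (τ.injective h3)
        unfold CI; omega
    · intro hf u hu
      by_contra hne
      exact not_sameCycle_of_fixed τ hf hne (Equiv.Perm.SameCycle.trans (Equiv.Perm.SameCycle.symm hv) hu)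

theorem mapsSwap_of {α : Type*} [Finite α] (τ : Equiv.Perm α) (S : Set α) {x y : α}
    (hx : x ∈ S) (hy : y ∈ S) (hxy : τ.SameCycle x y) (hne : x ≠ y)
    (hS : ∀ u ∈ S, τ.SameCycle x u → u = x ∨ u = y) : MapsSwap τ S x y := by
  obtain ⟨pos, hinj, hrot⟩ := exists_pos_orbit τ x
  have hxx : τ.SameCycle x x := Equiv.Perm.SameCycle.refl _ _
  have h1 := induced_isNext hinj hrot S hx hxx
  have h2 := induced_isNext hinj hrot S hy hxy
  constructor
  · rcases hS _ h1.1.1 h1.1.2 with h | h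
    · exact absurd (h1.2.2 h y ⟨hy, hxy⟩) (Ne.symm hne)
    · exact h
  · rcases hS _ h2.1.1 h2.1.2 with h | h
    · exact h
    · exact absurd (h2.2.2 h x ⟨hx, hxx⟩) hne

theorem mapsCyc3_of {α : Type*} [Finite α] (τ : Equiv.Perm α) (S : Set α) {z w : α}
    (hz : z ∈ S) (hτz : τ z ∈ S) (hw : w ∈ S) (hzw : τ.SameCycle z w) (h1 : z ≠ τ z)
    (h2 : w ≠ z) (h3 : w ≠ τ z)
    (hS : ∀ u ∈ S, τ.SameCycle z u → u = z ∨ u = τ z ∨ u = w) : MapsCyc3 τ S z (τ z) w := by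
  obtain ⟨pos, hinj, hrot⟩ := exists_pos_orbit τ z
  have hzz : τ.SameCycle z z := Equiv.Perm.SameCycle.refl _ _
  have hzt : τ.SameCycle z (τ z) := by simpa using hzz
  have g1 := induced_isNext hinj hrot S hz hzz
  have g2 := induced_isNext hinj hrot S hτz hzt
  have g3 := induced_isNext hinj hrot S hw hzw
  have g := (hrot z hzz).2.1 w hzw
  have n1 : pos z ≠ pos (τ z) := fun e => h1 (hinj hzz hzt e)
  have n2 : pos w ≠ pos z := fun e => h2 (hinj hzw hzz e)
  have n3 : pos w ≠ pos (τ z) := fun e => h3 (hinj hzw hzt e)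
  refine ⟨?_, ?_, ?_⟩
  · rcases hS _ g1.1.1 g1.1.2 with h | h | h
    · exact absurd (g1.2.2 h w ⟨hw, hzw⟩) h2
    · exact h
    · have := g1.2.1 _ ⟨hτz, hzt⟩
      rw [h] at this
      unfold CI at g this; omega
  · rcases hS _ g2.1.1 g2.1.2 with h | h | h
    · have := g2.2.1 _ ⟨hw, hzw⟩
      rw [h] at this
      unfold CI at g this; omega
    · exact absurd (g2.2.2 h w ⟨hw, hzw⟩) h3
    · exact h
  · rcases hS _ g3.1.1 g3.1.2 with h | h | h
    · exact h
    · have := g3.2.1 _ ⟨hz, hzz⟩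
      rw [h] at this
      unfold CI at g this; omega
    · exact absurd (g3.2.2 h z ⟨hz, hzz⟩) (Ne.symm h2)

/-- Cyclic order of three points. -/
def Cyc3 {α : Type*} (pos : α → ℕ) (a b c : α) : Prop :=
  (pos a < pos b ∧ pos b < pos c) ∨ (pos b < pos c ∧ pos c < pos a) ∨
    (pos c < pos a ∧ pos a < pos b)

/-- Cyclic order of four points. -/
def Cyc4 {α : Type*} (pos : α → ℕ) (a b c d : α) : Prop :=
  (pos a < pos b ∧ pos b < pos c ∧ pos c < pos d) ∨ (pos b < pos c ∧ pos c < pos d ∧ pos d < pos a)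
    ∨ (pos c < pos d ∧ pos d < pos a ∧ pos a < pos b) ∨
    (pos d < pos a ∧ pos a < pos b ∧ pos b < pos c)

theorem isNext_of {α : Type*} {pos : α → ℕ} {S : Set α} {a b : α} (hb : b ∈ S) (hne : b ≠ a)
    (h : ∀ u ∈ S, ¬ CI pos a b u) : IsNext pos S a b := ⟨hb, h, fun e => absurd e hne⟩

theorem mapsCyc3_of_cyc {α : Type*} [Finite α] {pos : α → ℕ} {D : Set α} {f : Equiv.Perm α}
    (hinj : Set.InjOn pos D) (h : RotOn pos D f) {a b c : α} (ha : a ∈ D) (hb : b ∈ D) (hc : c ∈ D)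
    (hcyc : Cyc3 pos a b c) : MapsCyc3 f {a, b, c} a b c := by
  have hS : ({a, b, c} : Set α) ∩ D = {a, b, c} := by
    rw [Set.inter_eq_left]
    rintro u (rfl | rfl | rfl) <;> assumption
  unfold Cyc3 at hcyc
  refine ⟨induced_eq_of_isNext hinj h _ (by simp) ha ?_,
    induced_eq_of_isNext hinj h _ (by simp) hb ?_, induced_eq_of_isNext hinj h _ (by simp) hc ?_⟩
  all_goals
    rw [hS]
    refine isNext_of (by simp) (by rintro rfl; omega) ?_
    rintro u (rfl | rfl | rfl) <;> unfold CI <;> omega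

theorem mapsCyc4_of_cyc {α : Type*} [Finite α] {pos : α → ℕ} {D : Set α} {f : Equiv.Perm α}
    (hinj : Set.InjOn pos D) (h : RotOn pos D f) {a b c d : α} (ha : a ∈ D) (hb : b ∈ D)
    (hc : c ∈ D) (hd : d ∈ D)
    (hcyc : Cyc4 pos a b c d) : MapsCyc4 f {a, b, c, d} a b c d := by
  have hS : ({a, b, c, d} : Set α) ∩ D = {a, b, c, d} := by
    rw [Set.inter_eq_left]
    rintro u (rfl | rfl | rfl | rfl) <;> assumption
  unfold Cyc4 at hcyc
  refine ⟨induced_eq_of_isNext hinj h _ (by simp) ha ?_,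
    induced_eq_of_isNext hinj h _ (by simp) hb ?_, induced_eq_of_isNext hinj h _ (by simp) hc ?_,
    induced_eq_of_isNext hinj h _ (by simp) hd ?_⟩
  all_goals
    rw [hS]
    refine isNext_of (by simp) (by rintro rfl; omega) ?_
    rintro u (rfl | rfl | rfl | rfl) <;> unfold CI <;> omega

theorem cyc3_of_maps {α : Type*} [Finite α] {pos : α → ℕ} {D S : Set α} {f : Equiv.Perm α}
    (hinj : Set.InjOn pos D) (h : RotOn pos D f) {a b c : α} (ha : a ∈ D) (hb : b ∈ D) (hc : c ∈ D)
    (haS : a ∈ S) (hcS : c ∈ S)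
    (hab : a ≠ b) (hac : a ≠ c) (hbc : b ≠ c)
    (hm : MapsCyc3 f S a b c) : Cyc3 pos a b c := by
  have h1 := induced_isNext hinj h S haS ha
  rw [hm.1] at h1
  have h2 := h1.2.1 c ⟨hcS, hc⟩
  have n1 : pos a ≠ pos b := fun e => hab (hinj ha hb e)
  have n2 : pos a ≠ pos c := fun e => hac (hinj ha hc e)
  have n3 : pos b ≠ pos c := fun e => hbc (hinj hb hc e)
  unfold CI at h2
  unfold Cyc3
  omega

theorem cyc4_of_maps {α : Type*} [Finite α] {pos : α → ℕ} {D S : Set α} {f : Equiv.Perm α}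
    (hinj : Set.InjOn pos D) (h : RotOn pos D f) {a b c d : α} (ha : a ∈ D) (hb : b ∈ D)
    (hc : c ∈ D) (hd : d ∈ D)
    (haS : a ∈ S) (hbS : b ∈ S) (hcS : c ∈ S) (hdS : d ∈ S)
    (hne : List.Pairwise (· ≠ ·) [a, b, c, d])
    (hm : MapsCyc4 f S a b c d) : Cyc4 pos a b c d := by
  have h1 := induced_isNext hinj h S haS ha
  have g1 := induced_isNext hinj h S hbS hb
  rw [hm.1] at h1
  rw [hm.2.1] at g1
  have h2 := h1.2.1 c ⟨hcS, hc⟩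
  have h3 := h1.2.1 d ⟨hdS, hd⟩
  have g2 := g1.2.1 d ⟨hdS, hd⟩
  simp only [List.pairwise_cons, List.mem_cons, List.not_mem_nil, or_false, forall_eq_or_imp,
    forall_eq] at hne
  have n1 : pos a ≠ pos b := fun e => hne.1.1 (hinj ha hb e)
  have n2 : pos a ≠ pos c := fun e => hne.1.2.1 (hinj ha hc e)
  have n3 : pos a ≠ pos d := fun e => hne.1.2.2 (hinj ha hd e)
  have n4 : pos b ≠ pos c := fun e => hne.2.1.1 (hinj hb hc e)
  have n5 : pos b ≠ pos d := fun e => hne.2.1.2 (hinj hb hd e)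
  have n6 : pos c ≠ pos d := fun e => hne.2.2.1 (hinj hc hd e)
  unfold CI at h2 h3 g2
  unfold Cyc4
  omega

/-! Consequences of `NCs`. -/

theorem ncs_rotOn {α : Type*} [Finite α] {pos : α → ℕ} {τ : Equiv.Perm α} (hτ : NCs pos τ) (e : α) :
    RotOn pos {b | τ.SameCycle e b} τ := by
  intro z hz
  have hz' : τ.SameCycle e z := hz
  refine ⟨by simpa using hz', ?_, ?_⟩
  · intro u hu hc
    have hu' : τ.SameCycle e u := hu
    have := sameCycle_of_step τ _ (hτ z) (hu'.symm.trans hz') hc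
    unfold CI at this; omega
  · intro hf u hu
    by_contra hne
    exact not_sameCycle_of_fixed τ hf hne (hz'.symm.trans hu)

/-- Two orbits of a non-crossing permutation do not cross. -/
theorem ncs_noCross {α : Type*} [Finite α] {pos : α → ℕ} (hinj : Function.Injective pos)
    {τ : Equiv.Perm α} (hτ : NCs pos τ) {a c b d : α}
    (hac : τ.SameCycle a c) (hbd : τ.SameCycle b d) (hab : ¬ τ.SameCycle a b)
    (h : CI pos a c b) : CI pos a c d := by
  obtain ⟨i, -, hi⟩ := hac.exists_pow_eq'
  clear hac
  subst hi
  induction i with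
  | zero => unfold CI at h; simp at h; omega
  | succ i ih =>
    rw [pow_succ', Equiv.Perm.mul_apply] at h ⊢
    set v := (τ ^ i) a with hv
    have hav : τ.SameCycle a v := ⟨i, by rw [zpow_natCast]⟩
    have h1 := hτ v
    have h2 : ¬ CI pos v (τ v) a := by
      intro hc
      have := sameCycle_of_step τ _ (hτ v) hav hc
      unfold CI at this; omega
    have nb : pos b ≠ pos v := by
      intro e; rw [hinj e] at hab; exact hab hav
    have hbd' := sameCycle_of_step τ _ (hτ v) hbd
    have nab : pos a ≠ pos b := by
      intro e; rw [hinj e] at hab; exact hab (Equiv.Perm.SameCycle.refl _ _)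
    have nav : pos v = pos a → v = a := fun e => hinj e
    by_cases hb1 : CI pos a v b
    · have hd1 := ih hb1
      unfold CI at *; omega
    · have hb2 : CI pos v (τ v) b := by
        unfold CI at *; omega
      have hd2 := hbd' hb2
      unfold CI at *; omega

/-- Positions in the cut annulus: `y, γ y, …, γ⁻¹ y, γ x, …, γ⁻¹ x, x`. -/
def posA (p q : ℕ) (x y i : Fin (p + q)) : ℕ :=
  if (i : ℕ) < p then
    (if (x : ℕ) < (i : ℕ) then q + (i : ℕ) - x - 1 else q + (i : ℕ) + p - x - 1)
  else (if (y : ℕ) ≤ (i : ℕ) then (i : ℕ) - y else (i : ℕ) + q - y)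

theorem posA_spec (p q : ℕ) (x y i : Fin (p + q)) (hx : (x : ℕ) < p) (hy : p ≤ (y : ℕ)) :
    ((x : ℕ) < i ∧ (i : ℕ) < p ∧ posA p q x y i + x + 1 = q + i) ∨
    ((i : ℕ) ≤ x ∧ posA p q x y i + x + 1 = q + i + p) ∨
    ((y : ℕ) ≤ i ∧ posA p q x y i + y = i) ∨
    (p ≤ (i : ℕ) ∧ (i : ℕ) < y ∧ posA p q x y i + y = i + q) := by
  have := x.2
  have := y.2
  have := i.2
  unfold posA
  split_ifs <;> omega

theorem posA_inj (p q : ℕ) (x y : Fin (p + q)) (hx : (x : ℕ) < p) (hy : p ≤ (y : ℕ)) :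
    Function.Injective (posA p q x y) := by
  intro i j hij
  have h1 := posA_spec p q x y i hx hy
  have h2 := posA_spec p q x y j hx hy
  have := i.2
  have := j.2
  have := y.2
  apply Fin.ext
  omega

theorem gammaExt_val (p q : ℕ) (i : Fin (p + q)) :
    ((i : ℕ) + 1 < p ∧ (gammaExt p q i : ℕ) = i + 1) ∨ ((i : ℕ) + 1 = p ∧ (gammaExt p q i : ℕ) = 0)
    ∨ (p ≤ (i : ℕ) ∧ gammaExt p q i = i) := by
  have hlen : ((List.finRange (p + q)).take p).length = p := by simp
  have hnd : ((List.finRange (p + q)).take p).Nodup :=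
    (List.nodup_finRange _).sublist (List.take_sublist _ _)
  by_cases hi : (i : ℕ) < p
  · have h := List.formPerm_apply_getElem _ hnd (i : ℕ) (by omega)
    have e1 : ((List.finRange (p + q)).take p)[(i : ℕ)]'(by omega) = i := by simp
    rw [e1] at h
    have e2 : (gammaExt p q i : ℕ) = (i + 1) % p := by
      unfold gammaExt
      rw [h]
      simp [hlen]
    rw [e2]
    by_cases h2 : (i : ℕ) + 1 < p
    · left; exact ⟨h2, Nat.mod_eq_of_lt h2⟩
    · right; left
      have : (i : ℕ) + 1 = p := by omega
      rw [this]; simp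
  · right; right
    refine ⟨by omega, ?_⟩
    apply List.formPerm_apply_of_notMem
    intro hm
    obtain ⟨k, hk, rfl⟩ := List.mem_iff_getElem.1 hm
    rw [hlen] at hk
    simp at hi
    omega

theorem gammaInt_val (p q : ℕ) (i : Fin (p + q)) :
    (p ≤ (i : ℕ) ∧ (i : ℕ) + 1 < p + q ∧ (gammaInt p q i : ℕ) = i + 1) ∨
    (p ≤ (i : ℕ) ∧ (i : ℕ) + 1 = p + q ∧ (gammaInt p q i : ℕ) = p)
    ∨ ((i : ℕ) < p ∧ gammaInt p q i = i) := by
  have hlen : ((List.finRange (p + q)).drop p).length = q := by simp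
  have hnd : ((List.finRange (p + q)).drop p).Nodup :=
    (List.nodup_finRange _).sublist (List.drop_sublist _ _)
  have hi2 := i.2
  by_cases hi : p ≤ (i : ℕ)
  · have h := List.formPerm_apply_getElem _ hnd ((i : ℕ) - p) (by omega)
    have e1 : ((List.finRange (p + q)).drop p)[(i : ℕ) - p]'(by omega) = i := by
      apply Fin.ext; simp; omega
    rw [e1] at h
    have e2 : (gammaInt p q i : ℕ) = p + (i - p + 1) % q := by
      unfold gammaInt
      rw [h]
      simp [hlen]
    rw [e2]
    by_cases h2 : (i : ℕ) + 1 < p + q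
    · left; refine ⟨hi, h2, ?_⟩
      rw [Nat.mod_eq_of_lt (by omega)]; omega
    · right; left
      have : (i : ℕ) - p + 1 = q := by omega
      rw [this]; simp; omega
  · right; right
    refine ⟨by omega, ?_⟩
    apply List.formPerm_apply_of_notMem
    intro hm
    obtain ⟨k, hk, rfl⟩ := List.mem_iff_getElem.1 hm
    rw [hlen] at hk
    simp at hi

theorem gammaAnn_ext (p q : ℕ) (i : Fin (p + q)) (h : (i : ℕ) < p) :
    gammaAnn p q i = gammaExt p q i := by
  unfold gammaAnn
  rw [Equiv.Perm.mul_apply]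
  rcases gammaInt_val p q i with h1 | h1 | h1
  · omega
  · omega
  · rw [h1.2]

theorem gammaAnn_int (p q : ℕ) (i : Fin (p + q)) (h : p ≤ (i : ℕ)) :
    gammaAnn p q i = gammaInt p q i := by
  unfold gammaAnn
  rw [Equiv.Perm.mul_apply]
  have h1 := gammaInt_val p q i
  have h2 := gammaExt_val p q (gammaInt p q i)
  rcases h2 with h2 | h2 | h2
  · omega
  · omega
  · exact h2.2

theorem posA_gammaExt (p q : ℕ) (x y i : Fin (p + q)) (hx : (x : ℕ) < p) (hy : p ≤ (y : ℕ))
    (hi : (i : ℕ) < p) :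
    (gammaExt p q i : ℕ) < p ∧
    ((i = x ∧ posA p q x y i + 1 = p + q ∧ posA p q x y (gammaExt p q i) = q) ∨
     (i ≠ x ∧ posA p q x y i + 1 < p + q ∧ 
        posA p q x y (gammaExt p q i) = posA p q x y i + 1)) ∧ q ≤ posA p q x y i := by
  have h1 := posA_spec p q x y i hx hy
  have h2 := posA_spec p q x y (gammaExt p q i) hx hy
  have h3 := gammaExt_val p q i
  have h4 : i = x ↔ (i : ℕ) = x := Fin.ext_iff
  rcases h3 with h3 | h3 | h3
  · rw [Ne, h4]; omega
  · rw [Ne, h4]; omega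
  · omega

theorem posA_gammaInt (p q : ℕ) (x y i : Fin (p + q)) (hx : (x : ℕ) < p) (hy : p ≤ (y : ℕ))
    (hi : p ≤ (i : ℕ)) :
    p ≤ (gammaInt p q i : ℕ) ∧
    ((gammaInt p q i = y ∧ posA p q x y i + 1 = q ∧ posA p q x y (gammaInt p q i) = 0) ∨
     (gammaInt p q i ≠ y ∧ posA p q x y i + 1 < q ∧ 
        posA p q x y (gammaInt p q i) = posA p q x y i + 1)) := by
  have h1 := posA_spec p q x y i hx hy
  have h2 := posA_spec p q x y (gammaInt p q i) hx hy
  have h3 := gammaInt_val p q i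
  have hy2 := y.2
  have hi2 := i.2
  have h4 : gammaInt p q i = y ↔ (gammaInt p q i : ℕ) = y := Fin.ext_iff
  rcases h3 with h3 | h3 | h3
  · rw [Ne, h4]; omega
  · rw [Ne, h4]; omega
  · omega

theorem posA_ext (p q : ℕ) (x y i : Fin (p + q)) (hx : (x : ℕ) < p) (hy : p ≤ (y : ℕ)) :
    ((i : ℕ) < p ↔ q ≤ posA p q x y i) ∧ posA p q x y i < p + q := by
  have h1 := posA_spec p q x y i hx hy
  have hy2 := y.2
  have hi2 := i.2
  omega

theorem posA_x (p q : ℕ) (x y : Fin (p + q)) (hx : (x : ℕ) < p) (hy : p ≤ (y : ℕ)) :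
    posA p q x y x + 1 = p + q ∧ posA p q x y y = 0 := by
  have h1 := posA_spec p q x y x hx hy
  have h2 := posA_spec p q x y y hx hy
  have hy2 := y.2
  omega

theorem rotOn_ext (p q : ℕ) (x y : Fin (p + q)) (hx : (x : ℕ) < p) (hy : p ≤ (y : ℕ)) :
    RotOn (posA p q x y) (extSet p q) (gammaExt p q) := by
  intro z hz
  have hz' : (z : ℕ) < p := hz
  have h := posA_gammaExt p q x y z hx hy hz'
  refine ⟨h.1, ?_, ?_⟩
  · intro u hu
    have hu' := posA_ext p q x y u hx hy
    have : (u : ℕ) < p := hu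
    unfold CI
    omega
  · intro he u hu
    have hu' := posA_ext p q x y u hx hy
    have : (u : ℕ) < p := hu
    rw [he] at h
    apply posA_inj p q x y hx hy
    omega

theorem rotOn_int (p q : ℕ) (x y : Fin (p + q)) (hx : (x : ℕ) < p) (hy : p ≤ (y : ℕ)) :
    RotOn (posA p q x y) (intSet p q) (gammaInt p q) := by
  intro z hz
  have hz' : p ≤ (z : ℕ) := hz
  have h := posA_gammaInt p q x y z hx hy hz'
  refine ⟨h.1, ?_, ?_⟩
  · intro u hu
    have hu' := posA_ext p q x y u hx hy
    have : p ≤ (u : ℕ) := hu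
    unfold CI
    omega
  · intro he u hu
    have hu' := posA_ext p q x y u hx hy
    have : p ≤ (u : ℕ) := hu
    rw [he] at h
    apply posA_inj p q x y hx hy
    omega

theorem rotOn_ann_ext (p q : ℕ) (x y : Fin (p + q)) (hx : (x : ℕ) < p) (hy : p ≤ (y : ℕ)) :
    RotOn (posA p q x y) (extSet p q) (gammaAnn p q) := by
  intro z hz
  rw [gammaAnn_ext p q z hz]
  exact rotOn_ext p q x y hx hy z hz

theorem rotOn_ann_int (p q : ℕ) (x y : Fin (p + q)) (hx : (x : ℕ) < p) (hy : p ≤ (y : ℕ)) :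
    RotOn (posA p q x y) (intSet p q) (gammaAnn p q) := by
  intro z hz
  rw [gammaAnn_int p q z hz]
  exact rotOn_int p q x y hx hy z hz

open Equiv in
theorem isRot_cut (p q : ℕ) (x y : Fin (p + q)) (hx : (x : ℕ) < p) (hy : p ≤ (y : ℕ)) :
    IsRot (p + q) (posA p q x y) (gammaAnn p q * swap x ((gammaAnn p q)⁻¹ y)) := by
  intro z
  have hxy := posA_x p q x y hx hy
  have hy2 := y.2
  by_cases h1 : z = x
  · subst h1
    left
    simp only [Perm.mul_apply, swap_apply_left]
    rw [show gammaAnn p q ((gammaAnn p q)⁻¹ y) = y by simp]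
    exact hxy
  by_cases h2 : z = (gammaAnn p q)⁻¹ y
  · right
    have h3 : gammaAnn p q z = y := by rw [h2]; simp
    rw [← h2]
    simp only [Perm.mul_apply, swap_apply_right]
    rw [gammaAnn_ext p q x hx]
    have hz : p ≤ (z : ℕ) := by
      by_contra hcon
      push Not at hcon
      have := posA_gammaExt p q x y z hx hy hcon
      rw [gammaAnn_ext p q z hcon] at h3
      rw [h3] at this
      omega
    rw [gammaAnn_int p q z hz] at h3
    have g1 := posA_gammaInt p q x y z hx hy hz
    have g2 := posA_gammaExt p q x y x hx hy hx
    rw [h3] at g1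
    simp only [ne_eq, not_true_eq_false, false_and, or_false, true_and] at g1 g2
    omega
  · right
    rw [Perm.mul_apply, swap_apply_of_ne_of_ne h1 h2]
    have h3 : gammaAnn p q z ≠ y := by
      intro e; apply h2; rw [← e]; simp
    by_cases hz : (z : ℕ) < p
    · have := posA_gammaExt p q x y z hx hy hz
      rw [gammaAnn_ext p q z hz]
      simp only [h1, false_and, false_or] at this
      omega
    · push Not at hz
      have := posA_gammaInt p q x y z hx hy hz
      rw [gammaAnn_int p q z hz] at h3 ⊢
      simp only [h3, false_and, false_or] at this
      omega

theorem posA_pow_ext (p q : ℕ) (x y : Fin (p + q)) (hx : (x : ℕ) < p) (hy : p ≤ (y : ℕ)) (k : ℕ)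
    (hk : k + 1 < p) : ((gammaExt p q ^ (k+1)) x : ℕ) < p ∧
      posA p q x y ((gammaExt p q ^ (k+1)) x) = q + k := by
  induction k with
  | zero =>
    have := posA_gammaExt p q x y x hx hy hx
    simp only [zero_add, pow_one]
    simp only [ne_eq, not_true_eq_false, false_and, or_false, true_and] at this
    omega
  | succ k ih =>
    have ih := ih (by omega)
    rw [pow_succ', Equiv.Perm.mul_apply]
    have := posA_gammaExt p q x y _ hx hy ih.1
    have := posA_x p q x y hx hy
    omega

theorem posA_pow_int (p q : ℕ) (x y : Fin (p + q)) (hx : (x : ℕ) < p) (hy : p ≤ (y : ℕ)) (k : ℕ)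
    (hk : k + 1 < q) : p ≤ ((gammaInt p q ^ (k+1)) y : ℕ) ∧
      posA p q x y ((gammaInt p q ^ (k+1)) y) = k + 1 := by
  have hxy := posA_x p q x y hx hy
  induction k with
  | zero =>
    have := posA_gammaInt p q x y y hx hy hy
    simp only [zero_add, pow_one]
    omega
  | succ k ih =>
    have ih := ih (by omega)
    rw [pow_succ', Equiv.Perm.mul_apply]
    have := posA_gammaInt p q x y _ hx hy ih.1
    omega

theorem rotOn_lam (p q : ℕ) (x y : Fin (p + q)) (hx : (x : ℕ) < p) (hy : p ≤ (y : ℕ)) :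
    RotOn (posA p q x y) {i | i ≠ x ∧ i ≠ y} (lamPerm p q x y) := by
  have hinj := posA_inj p q x y hx hy
  have hxy := posA_x p q x y hx hy
  have hy2 := y.2
  unfold lamPerm
  set l := (((List.range (p - 1)).map fun k => (gammaExt p q ^ (k + 1)) x) ++
    ((List.range (q - 1)).map fun k => (gammaInt p q ^ (k + 1)) y)) with hl
  have hlen : l.length = p + q - 2 := by
    simp [hl]; omega
  have hget : ∀ (i : ℕ) (hi : i < l.length),
      (i + 1 < p ∧ posA p q x y l[i] = q + i) ∨ (p ≤ i + 1 ∧ posA p q x y l[i] + p = i + 2) := by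
    intro i hi
    by_cases h : i < p - 1
    · left
      refine ⟨by omega, ?_⟩
      have e : l[i] = (gammaExt p q ^ (i + 1)) x := by
        simp only [hl]
        rw [List.getElem_append_left (by simpa using h)]
        simp
      rw [e]
      exact (posA_pow_ext p q x y hx hy i (by omega)).2
    · right
      refine ⟨by omega, ?_⟩
      have e : l[i] = (gammaInt p q ^ (i - (p - 1) + 1)) y := by
        simp only [hl]
        rw [List.getElem_append_right (by simpa using h)]
        simp
      rw [e]
      have := (posA_pow_int p q x y hx hy (i - (p - 1)) (by omega)).2
      omega
  have hnd : l.Nodup := by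
    rw [List.nodup_iff_injective_get]
    intro i j hij
    have h1 := hget i i.2
    have h2 := hget j j.2
    simp only [List.get_eq_getElem] at hij
    rw [hij] at h1
    apply Fin.ext
    have := i.2
    have := j.2
    omega
  have hpos : ∀ u : Fin (p + q), u ≠ x → u ≠ y → 0 < posA p q x y u ∧ posA p q x y u + 1 < p + q := by
    intro u h1 h2
    have n1 : posA p q x y u ≠ posA p q x y x := fun e => h1 (hinj e)
    have n2 : posA p q x y u ≠ posA p q x y y := fun e => h2 (hinj e)
    have := posA_ext p q x y u hx hy
    omega
  intro z hz
  obtain ⟨hzx, hzy⟩ := hz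
  have hz := hpos z hzx hzy
  obtain ⟨i, hi, rfl⟩ : ∃ (i : ℕ) (hi : i < l.length), l[i] = z := by
    by_cases h : q ≤ posA p q x y z
    · have hi : posA p q x y z - q < l.length := by omega
      refine ⟨posA p q x y z - q, hi, hinj ?_⟩
      have := hget _ hi
      omega
    · have hi : posA p q x y z + p - 2 < l.length := by omega
      refine ⟨posA p q x y z + p - 2, hi, hinj ?_⟩
      have := hget _ hi
      omega
  rw [List.formPerm_apply_getElem l hnd i hi]
  have hi2 : (i + 1) % l.length < l.length := Nat.mod_lt _ (by omega)
  have hmod : ((i + 1) % l.length = i + 1 ∧ i + 1 < l.length) ∨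
      ((i + 1) % l.length = 0 ∧ i + 1 = l.length) := by
    by_cases h : i + 1 < l.length
    · exact Or.inl ⟨Nat.mod_eq_of_lt h, h⟩
    · have : i + 1 = l.length := by omega
      right; rw [this]; simp
  have g1 := hget i hi
  have g2 := hget _ hi2
  generalize l[(i+1) % l.length]'hi2 = w at g2 ⊢
  refine ⟨⟨?_, ?_⟩, ?_, ?_⟩
  · rintro rfl; omega
  · rintro rfl; omega
  · rintro u ⟨hu1, hu2⟩
    have := hpos u hu1 hu2
    unfold CI
    omega
  · rintro e u ⟨hu1, hu2⟩
    have := hpos u hu1 hu2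
    rw [e] at g2
    apply hinj
    omega

theorem ann_core (p q : ℕ) (τ : Equiv.Perm (Fin (p + q))) (x : Fin (p + q))
    (hx : (x : ℕ) < p) (hy : p ≤ (τ x : ℕ)) :
    numOrbits τ + numOrbits (τ⁻¹ * gammaAnn p q) ≤ p + q ∧
    (numOrbits τ + numOrbits (τ⁻¹ * gammaAnn p q) = p + q ↔ NCs (posA p q x (τ x)) τ) := by
  have : Nonempty (Fin (p + q)) := ⟨x⟩
  have hne : τ x ≠ gammaAnn p q x := by
    intro e
    rw [gammaAnn_ext p q x hx] at e
    have := (posA_gammaExt p q x (τ x) x hx hy hx).1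
    rw [← e] at this
    omega
  have hcut := numOrbits_cut τ (gammaAnn p q) x hne
  have hrot := isRot_cut p q x (τ x) hx hy
  have hd := disc_iff (posA_inj p q x (τ x) hx hy) (by rw [Fintype.card_fin]; exact hrot) τ
  rw [hcut, Fintype.card_fin] at hd
  refine ⟨by omega, ?_⟩
  rw [← hd.2]
  omega

/-- A connecting orbit has an exit from the external points. -/
theorem exists_exit (p q : ℕ) (τ : Equiv.Perm (Fin (p + q))) {x y : Fin (p + q)}
    (hx : (x : ℕ) < p) (hy : p ≤ (y : ℕ)) (hxy : τ.SameCycle x y) :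
    ∃ x', τ.SameCycle x x' ∧ (x' : ℕ) < p ∧ p ≤ (τ x' : ℕ) := by
  by_contra hcon
  push Not at hcon
  have := sameCycle_of_step τ (fun a => τ.SameCycle x a ∧ (a : ℕ) < p)
    (fun a ha => ⟨by simpa using ha.1, hcon a ha.1 ha.2⟩) hxy ⟨Equiv.Perm.SameCycle.refl _ _, hx⟩
  omega

theorem standard_of_ncs (p q : ℕ) (τ : Equiv.Perm (Fin (p + q))) (x0 y0 : Fin (p + q))
    (hx : (x0 : ℕ) < p) (hy : p ≤ (y0 : ℕ)) (hnc : NCs (posA p q x0 y0) τ) :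
    AnnStandard p q τ := by
  have hinj := posA_inj p q x0 y0 hx hy
  have hext := fun i => posA_ext p q x0 y0 i hx hy
  constructor
  · rintro A ⟨e, rfl⟩
    have hrot := ncs_rotOn hnc e
    constructor
    · rintro b ⟨hb1, hb2⟩
      have h1 := induced_isNext hinj.injOn hrot ({b | τ.SameCycle e b} ∩ extSet p q) ⟨hb1, hb2⟩ hb1
      have h2 := induced_isNext hinj.injOn (rotOn_ext p q x0 y0 hx hy)
        ({b | τ.SameCycle e b} ∩ extSet p q) ⟨hb1, hb2⟩ hb2
      rw [Set.inter_eq_left.2 Set.inter_subset_left] at h1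
      rw [Set.inter_eq_left.2 Set.inter_subset_right] at h2
      exact isNext_unique (S := {b | τ.SameCycle e b} ∩ extSet p q) hinj.injOn ⟨hb1, hb2⟩ h1 h2
    · rintro b ⟨hb1, hb2⟩
      have h1 := induced_isNext hinj.injOn hrot ({b | τ.SameCycle e b} ∩ intSet p q) ⟨hb1, hb2⟩ hb1
      have h2 := induced_isNext hinj.injOn (rotOn_int p q x0 y0 hx hy)
        ({b | τ.SameCycle e b} ∩ intSet p q) ⟨hb1, hb2⟩ hb2
      rw [Set.inter_eq_left.2 Set.inter_subset_left] at h1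
      rw [Set.inter_eq_left.2 Set.inter_subset_right] at h2
      exact isNext_unique (S := {b | τ.SameCycle e b} ∩ intSet p q) hinj.injOn ⟨hb1, hb2⟩ h1 h2
  · rintro A ⟨e, rfl⟩ ⟨u, huA, hu⟩ ⟨v, hvA, hv⟩
    have hrot := ncs_rotOn hnc e
    have hu' : (u : ℕ) < p := hu
    have hv' : p ≤ (v : ℕ) := hv
    constructor
    · obtain ⟨a, ha, hmax⟩ := Set.exists_max_image {b | τ.SameCycle e b} (posA p q x0 y0)
        (Set.toFinite _) ⟨u, huA⟩
      have ha' := hmax u huA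
      have hau := (hext u).1
      have hav := (hext v).1
      have haa := (hext a).1
      have hn := hrot a ha
      refine ⟨a, ⟨⟨ha, show (a : ℕ) < p by omega⟩, ?_⟩, ?_⟩
      · change p ≤ (τ a : ℕ)
        by_contra hcon
        have h1 := (hext (τ a)).1
        have h2 := hmax _ hn.1
        by_cases h3 : τ a = a
        · have h4 := hn.2.2 h3 v hvA
          rw [h4] at hv'; omega
        · have h4 : posA p q x0 y0 (τ a) ≠ posA p q x0 y0 a := fun e => h3 (hinj e)
          have h5 := hn.2.1 v hvA
          unfold CI at h5; omega
      · rintro b ⟨⟨hb1, hb2⟩, hb3⟩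
        have hb2' : (b : ℕ) < p := hb2
        have hb3' : p ≤ (τ b : ℕ) := hb3
        have h1 := (hrot b hb1).2.1 a ha
        have h2 := hmax b hb1
        have h3 := (hext b).1
        have h4 := (hext (τ b)).1
        apply hinj
        unfold CI at h1; omega
    · obtain ⟨a, ha, hmax⟩ := Set.exists_max_image ({b | τ.SameCycle e b} ∩ intSet p q)
        (posA p q x0 y0) (Set.toFinite _) ⟨v, hvA, hv⟩
      have hn := hrot a ha.1
      have ha2 : p ≤ (a : ℕ) := ha.2
      have haa := (hext a).1
      have hau := (hext u).1
      refine ⟨a, ⟨ha, ?_⟩, ?_⟩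
      · change (τ a : ℕ) < p
        by_contra hcon
        push Not at hcon
        have h1 := (hext (τ a)).1
        have h2 := hmax _ ⟨hn.1, hcon⟩
        by_cases h3 : τ a = a
        · have h4 := hn.2.2 h3 u huA
          rw [h4] at hu'; omega
        · have h4 : posA p q x0 y0 (τ a) ≠ posA p q x0 y0 a := fun e => h3 (hinj e)
          have h5 := hn.2.1 u huA
          unfold CI at h5; omega
      · rintro b ⟨⟨hb1, hb2⟩, hb3⟩
        have hb2' : p ≤ (b : ℕ) := hb2
        have hb3' : (τ b : ℕ) < p := hb3
        have h1 := (hrot b hb1).2.1 a ha.1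
        have h2 := hmax b ⟨hb1, hb2⟩
        have h3 := (hext b).1
        have h4 := (hext (τ b)).1
        apply hinj
        unfold CI at h1; omega

theorem induced_sameCycle {α : Type*} [Finite α] (f : Equiv.Perm α) (S : Set α) {a : α}
    (ha : a ∈ S) : f.SameCycle a (induced f S a) := by
  obtain ⟨k, -, hk, -⟩ := induced_spec f S ha
  rw [← hk, ← Equiv.Perm.coe_pow]
  exact ⟨k, by rw [zpow_natCast]⟩

/-- Points swapped by the induced permutation have nothing else of `S` in their orbit. -/
theorem swap_isolated {α : Type*} [Finite α] {f : Equiv.Perm α} {S : Set α} {x y u : α}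
    (hx : x ∈ S) (hy : y ∈ S) (h : MapsSwap f S x y) (hu : u ∈ S) (hux : u ≠ x) (huy : u ≠ y) :
    ¬ f.SameCycle x u := by
  intro hs
  obtain ⟨pos, hinj, hrot⟩ := exists_pos_orbit f x
  have hxx : f.SameCycle x x := Equiv.Perm.SameCycle.refl _ _
  have hxy : f.SameCycle x y := by rw [← h.1]; exact induced_sameCycle f S hx
  have h1 := induced_isNext hinj hrot S hx hxx
  have h2 := induced_isNext hinj hrot S hy hxy
  rw [h.1] at h1
  rw [h.2] at h2
  by_cases e : y = x
  · exact hux (h1.2.2 e u ⟨hu, hs⟩)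
  have g1 := h1.2.1 u ⟨hu, hs⟩
  have g2 := h2.2.1 u ⟨hu, hs⟩
  have n1 : pos u ≠ pos x := fun e => hux (hinj hs hxx e)
  have n2 : pos u ≠ pos y := fun e => huy (hinj hs hxy e)
  have n3 : pos y ≠ pos x := fun e' => e (hinj hxy hxx e')
  unfold CI at g1 g2
  omega

theorem not_cyc4_of_ncs {α : Type*} [Finite α] {pos : α → ℕ} (hinj : Function.Injective pos)
    {τ : Equiv.Perm α} (hτ : NCs pos τ) {a b c d : α}
    (hac : τ.SameCycle a c) (hbd : τ.SameCycle b d) (hab : ¬ τ.SameCycle a b) :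
    ¬ Cyc4 pos a b c d := by
  intro h
  have h1 := ncs_noCross hinj hτ hac hbd hab (by unfold Cyc4 at h; unfold CI; omega)
  unfold Cyc4 at h
  unfold CI at h1
  omega

theorem not_AC1_of_ncs (p q : ℕ) (τ : Equiv.Perm (Fin (p + q))) (x0 y0 : Fin (p + q))
    (hx : (x0 : ℕ) < p) (hy : p ≤ (y0 : ℕ)) (hnc : NCs (posA p q x0 y0) τ) :
    ¬ AC1 p q τ := by
  rintro ⟨a, b, c, d, hne, hcyc, hsw⟩
  have hinj := posA_inj p q x0 y0 hx hy
  have hc4 : Cyc4 (posA p q x0 y0) a b c d := by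
    have ab : (gammaAnn p q).SameCycle a b := by
      rw [← hcyc.1]; exact induced_sameCycle _ _ (by simp)
    have bc : (gammaAnn p q).SameCycle b c := by
      rw [← hcyc.2.1]; exact induced_sameCycle _ _ (by simp)
    have cd : (gammaAnn p q).SameCycle c d := by
      rw [← hcyc.2.2.1]; exact induced_sameCycle _ _ (by simp)
    by_cases ha : (a : ℕ) < p
    · have st : ∀ i, i ∈ extSet p q → gammaAnn p q i ∈ extSet p q :=
        fun i hi => (rotOn_ann_ext p q x0 y0 hx hy i hi).1
      have hb := sameCycle_of_step _ _ st ab ha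
      have hc := sameCycle_of_step _ _ st bc hb
      have hd := sameCycle_of_step _ _ st cd hc
      exact cyc4_of_maps hinj.injOn (rotOn_ann_ext p q x0 y0 hx hy) ha hb hc hd (by simp) (by simp)
        (by simp) (by simp) hne hcyc
    · push Not at ha
      have st : ∀ i, i ∈ intSet p q → gammaAnn p q i ∈ intSet p q :=
        fun i hi => (rotOn_ann_int p q x0 y0 hx hy i hi).1
      have hb := sameCycle_of_step _ _ st ab ha
      have hc := sameCycle_of_step _ _ st bc hb
      have hd := sameCycle_of_step _ _ st cd hc
      exact cyc4_of_maps hinj.injOn (rotOn_ann_int p q x0 y0 hx hy) ha hb hc hd (by simp) (by simp)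
        (by simp) (by simp) hne hcyc
  simp only [List.pairwise_cons, List.mem_cons, List.not_mem_nil, or_false, forall_eq_or_imp,
    forall_eq] at hne
  refine not_cyc4_of_ncs hinj hnc ?_ ?_ ?_ hc4
  · rw [← hsw.1]; exact induced_sameCycle _ _ (by simp)
  · rw [← hsw.2.2.1]; exact induced_sameCycle _ _ (by simp)
  · exact swap_isolated (by simp) (by simp) ⟨hsw.1, hsw.2.1⟩ (by simp) (Ne.symm hne.1.1)
      hne.2.1.1

/-- In the situation of AC-2, AC-3: points of one orbit other than the orbit of `x, y` lie in one
of three arcs. -/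
theorem same_arc (p q : ℕ) (τ : Equiv.Perm (Fin (p + q))) (x0 x y : Fin (p + q))
    (hx0 : (x0 : ℕ) < p) (hy0 : p ≤ (τ x0 : ℕ)) (hnc : NCs (posA p q x0 (τ x0)) τ)
    (hx : τ.SameCycle x0 x) (hy : τ.SameCycle x0 y) {a b : Fin (p + q)}
    (hab : τ.SameCycle a b) (ha : ¬ τ.SameCycle x0 a) :
    (posA p q x0 (τ x0) a < posA p q x0 (τ x0) y ↔ posA p q x0 (τ x0) b < posA p q x0 (τ x0) y) ∧
    (posA p q x0 (τ x0) a < posA p q x0 (τ x0) x ↔ posA p q x0 (τ x0) b < posA p q x0 (τ x0) x) ∧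
    posA p q x0 (τ x0) a ≠ posA p q x0 (τ x0) x ∧ posA p q x0 (τ x0) a ≠ posA p q x0 (τ x0) y
    := by
  have hinj := posA_inj p q x0 (τ x0) hx0 hy0
  have hxy := posA_x p q x0 (τ x0) hx0 hy0
  have hb : ¬ τ.SameCycle x0 b := fun h => ha (h.trans hab.symm)
  have hl := fun i => (posA_ext p q x0 (τ x0) i hx0 hy0).2
  have key : ∀ u, τ.SameCycle x0 u → ∀ v, ¬ τ.SameCycle x0 v →
      posA p q x0 (τ x0) v ≠ posA p q x0 (τ x0) u := by
    intro u hu v hv e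
    rw [hinj e] at hv
    exact hv hu
  have main : ∀ u, τ.SameCycle x0 u → ∀ a b, τ.SameCycle a b → ¬ τ.SameCycle x0 a →
      posA p q x0 (τ x0) a < posA p q x0 (τ x0) u →
      posA p q x0 (τ x0) b < posA p q x0 (τ x0) u := by
    intro u hu a b hab ha hlt
    by_cases hux : u = x0
    · have := hl b
      have := key x0 (Equiv.Perm.SameCycle.refl _ _) b (fun h => ha (h.trans hab.symm))
      rw [hux]; omega
    have h1 : posA p q x0 (τ x0) u ≠ posA p q x0 (τ x0) x0 := fun e => hux (hinj e)
    have h2 := hl u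
    have := ncs_noCross hinj hnc (a := x0) (c := u) (b := a) (d := b) hu hab ha
      (by unfold CI; omega)
    have h3 := hl b
    unfold CI at this
    omega
  exact ⟨⟨main y hy a b hab ha, main y hy b a hab.symm hb⟩,
    ⟨main x hx a b hab ha, main x hx b a hab.symm hb⟩, key x hx a ha, key y hy a ha⟩

/-- Comparison of positions for two cuts: each of the three arcs keeps its order. -/
theorem arc_mono (p q : ℕ) (x0 y0 x y u v : Fin (p + q))
    (hx0 : (x0 : ℕ) < p) (hy0 : p ≤ (y0 : ℕ)) (hx : (x : ℕ) < p) (hy : p ≤ (y : ℕ))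
    (h1 : posA p q x0 y0 u < posA p q x0 y0 y ↔ posA p q x0 y0 v < posA p q x0 y0 y)
    (h2 : posA p q x0 y0 u < posA p q x0 y0 x ↔ posA p q x0 y0 v < posA p q x0 y0 x)
    (hu : posA p q x0 y0 u ≠ posA p q x0 y0 x) (hv : posA p q x0 y0 v ≠ posA p q x0 y0 x) :
    posA p q x0 y0 u < posA p q x0 y0 v ↔ posA p q x y u < posA p q x y v := by
  have a1 := posA_spec p q x0 y0 x hx0 hy0
  have a2 := posA_spec p q x0 y0 y hx0 hy0
  have a3 := posA_spec p q x0 y0 u hx0 hy0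
  have a4 := posA_spec p q x0 y0 v hx0 hy0
  have a5 := posA_spec p q x y u hx hy
  have a6 := posA_spec p q x y v hx hy
  have := x0.2
  have := y0.2
  have := x.2
  have := y.2
  have := u.2
  have := v.2
  generalize posA p q x y u = u1 at *
  generalize posA p q x y v = v1 at *
  generalize posA p q x0 y0 u = u0 at *
  generalize posA p q x0 y0 v = v0 at *
  generalize posA p q x0 y0 x = X at *
  generalize posA p q x0 y0 y = Y at *
  rcases a1 with a1 | a1 | a1 | a1 <;> try omega

/-- Location of the arcs for the second cut. -/
theorem arc_loc (p q : ℕ) (x0 y0 x y u : Fin (p + q))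
    (hx0 : (x0 : ℕ) < p) (hy0 : p ≤ (y0 : ℕ)) (hx : (x : ℕ) < p) (hy : p ≤ (y : ℕ))
    (hux : posA p q x0 y0 u ≠ posA p q x0 y0 x) :
    (posA p q x0 y0 u < posA p q x0 y0 y ↔
      (posA p q x y y0 ≤ posA p q x y u ∧ posA p q x y u < q ∧ y0 ≠ y)) ∧
    (posA p q x0 y0 x < posA p q x0 y0 u ↔
      (q ≤ posA p q x y u ∧ posA p q x y u ≤ posA p q x y x0 ∧ x ≠ x0)) ∧
    posA p q x0 y0 y < q ∧ q ≤ posA p q x0 y0 x := by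
  have a1 := posA_spec p q x0 y0 x hx0 hy0
  have a2 := posA_spec p q x0 y0 y hx0 hy0
  have a3 := posA_spec p q x0 y0 u hx0 hy0
  have a5 := posA_spec p q x y u hx hy
  have a6 := posA_spec p q x y x0 hx hy
  have a7 := posA_spec p q x y y0 hx hy
  have := x0.2
  have := y0.2
  have := x.2
  have := y.2
  have := u.2
  rw [ne_eq, Fin.ext_iff, ne_eq, Fin.ext_iff]
  omega

theorem not_AC2_of_ncs (p q : ℕ) (τ : Equiv.Perm (Fin (p + q)))
    (hnc : ∀ x0 : Fin (p + q), (x0 : ℕ) < p → p ≤ (τ x0 : ℕ) → NCs (posA p q x0 (τ x0)) τ) :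
    ¬ AC2 p q τ := by
  rintro ⟨a, b, c, x, y, hne, hx, hy, hcyc, hcyc', hsw⟩
  simp only [List.pairwise_cons, List.mem_cons, List.not_mem_nil, or_false, forall_eq_or_imp,
    forall_eq] at hne
  obtain ⟨⟨hab, hac, hax, hay⟩, ⟨hbc, hbx, hby⟩, ⟨hcx, hcy⟩, ⟨hxy, -⟩⟩ := hne
  have sxy : τ.SameCycle x y := by rw [← hsw.1]; exact induced_sameCycle _ _ (by simp)
  have sac : τ.SameCycle a c := by rw [← hcyc'.1]; exact induced_sameCycle _ _ (by simp)
  have scb : τ.SameCycle c b := by rw [← hcyc'.2.1]; exact induced_sameCycle _ _ (by simp)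
  have nxa : ¬ τ.SameCycle x a := swap_isolated (by simp) (by simp) hsw (by simp) hax hay
  obtain ⟨x0, sx, hx0, hy0⟩ := exists_exit p q τ hx hy sxy
  have hnc := hnc x0 hx0 hy0
  have hinj := posA_inj p q x0 (τ x0) hx0 hy0
  have hc1 : Cyc3 (posA p q x y) a b c :=
    cyc3_of_maps (posA_inj p q x y hx hy).injOn (rotOn_lam p q x y hx hy)
      ⟨hax, hay⟩ ⟨hbx, hby⟩ ⟨hcx, hcy⟩ (by simp) (by simp) hab hac hbc hcyc
  have hc2 : Cyc3 (posA p q x0 (τ x0)) a c b :=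
    cyc3_of_maps hinj.injOn (ncs_rotOn hnc a)
      (Equiv.Perm.SameCycle.refl _ _) sac (sac.trans scb) (by simp) (by simp) hac hab (Ne.symm hbc)
      hcyc'
  have n0 : ¬ τ.SameCycle x0 a := fun h => nxa (sx.trans h)
  have ar1 := same_arc p q τ x0 x y hx0 hy0 hnc sx.symm (sx.symm.trans sxy) sac n0
  have ar2 := same_arc p q τ x0 x y hx0 hy0 hnc sx.symm (sx.symm.trans sxy) (sac.trans scb) n0
  have ar3 := same_arc p q τ x0 x y hx0 hy0 hnc sx.symm (sx.symm.trans sxy) scb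
    (fun h => n0 (h.trans sac.symm))
  have ar4 := same_arc p q τ x0 x y hx0 hy0 hnc sx.symm (sx.symm.trans sxy) scb.symm
    (fun h => n0 (h.trans (sac.trans scb).symm))
  have o1 := arc_mono p q x0 (τ x0) x y a b hx0 hy0 hx hy ar2.1 ar2.2.1 ar2.2.2.1 ar4.2.2.1
  have o2 := arc_mono p q x0 (τ x0) x y b c hx0 hy0 hx hy ar4.1 ar4.2.1 ar4.2.2.1 ar3.2.2.1
  have o3 := arc_mono p q x0 (τ x0) x y c a hx0 hy0 hx hy ar1.1.symm ar1.2.1.symm ar3.2.2.1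
    ar1.2.2.1
  unfold Cyc3 at hc1 hc2
  clear ar1 ar2 ar3 ar4
  omega

set_option maxHeartbeats 1600000 in
theorem not_AC3_of_ncs (p q : ℕ) (τ : Equiv.Perm (Fin (p + q)))
    (hnc : ∀ x0 : Fin (p + q), (x0 : ℕ) < p → p ≤ (τ x0 : ℕ) → NCs (posA p q x0 (τ x0)) τ) :
    ¬ AC3 p q τ := by
  rintro ⟨a, b, c, d, x, y, hne, hx, hy, hcyc, hsw2, hsw⟩
  simp only [List.pairwise_cons, List.mem_cons, List.not_mem_nil, or_false, forall_eq_or_imp,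
    forall_eq] at hne
  obtain ⟨⟨hab, hac, had, hax, hay⟩, ⟨hbc, hbd, hbx, hby⟩, ⟨hcd, hcx, hcy⟩, ⟨hdx, hdy⟩, ⟨hxy, -⟩⟩ :=
    hne
  have sxy : τ.SameCycle x y := by rw [← hsw.1]; exact induced_sameCycle _ _ (by simp)
  have sac : τ.SameCycle a c := by rw [← hsw2.1]; exact induced_sameCycle _ _ (by simp)
  have sbd : τ.SameCycle b d := by rw [← hsw2.2.2.1]; exact induced_sameCycle _ _ (by simp)
  have nxa : ¬ τ.SameCycle x a := swap_isolated (by simp) (by simp) hsw (by simp) hax hay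
  have nxb : ¬ τ.SameCycle x b := swap_isolated (by simp) (by simp) hsw (by simp) hbx hby
  have nab : ¬ τ.SameCycle a b := swap_isolated (by simp) (by simp) ⟨hsw2.1, hsw2.2.1⟩ (by simp)
    (Ne.symm hab) hbc
  obtain ⟨x0, sx, hx0, hy0⟩ := exists_exit p q τ hx hy sxy
  have hnc := hnc x0 hx0 hy0
  have hinj := posA_inj p q x0 (τ x0) hx0 hy0
  have hc1 : Cyc4 (posA p q x y) a b c d :=
    cyc4_of_maps (posA_inj p q x y hx hy).injOn (rotOn_lam p q x y hx hy)
      ⟨hax, hay⟩ ⟨hbx, hby⟩ ⟨hcx, hcy⟩ ⟨hdx, hdy⟩ (by simp) (by simp) (by simp) (by simp)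
      (by simp [*]) hcyc
  have hc2 := ncs_noCross hinj hnc sac sbd nab
  have hc3 := ncs_noCross hinj hnc sac sbd.symm (fun h => nab (h.trans sbd.symm))
  have n0 : ¬ τ.SameCycle x0 a := fun h => nxa (sx.trans h)
  have n1 : ¬ τ.SameCycle x0 b := fun h => nxb (sx.trans h)
  have ar1 := same_arc p q τ x0 x y hx0 hy0 hnc sx.symm (sx.symm.trans sxy) sac n0
  have ar2 := same_arc p q τ x0 x y hx0 hy0 hnc sx.symm (sx.symm.trans sxy) sbd n1
  have ar3 := same_arc p q τ x0 x y hx0 hy0 hnc sx.symm (sx.symm.trans sxy) sac.symm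
    (fun h => n0 (h.trans sac.symm))
  have ar4 := same_arc p q τ x0 x y hx0 hy0 hnc sx.symm (sx.symm.trans sxy) sbd.symm
    (fun h => n1 (h.trans sbd.symm))
  have mono : ∀ u v : Fin (p + q), u ≠ v → posA p q x0 (τ x0) u ≠ posA p q x0 (τ x0) v :=
    fun u v h e => h (hinj e)
  have m1 := mono _ _ hab
  have m2 := mono _ _ hac
  have m3 := mono _ _ had
  have m4 := mono _ _ hbc
  have m5 := mono _ _ hbd
  have m6 := mono _ _ hcd
  unfold Cyc4 at hc1
  unfold CI at hc2 hc3
  clear mono hnc hinj hcyc hsw2 hsw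
  by_cases hsame : (posA p q x0 (τ x0) a < posA p q x0 (τ x0) y ↔
      posA p q x0 (τ x0) b < posA p q x0 (τ x0) y) ∧
    (posA p q x0 (τ x0) a < posA p q x0 (τ x0) x ↔ posA p q x0 (τ x0) b < posA p q x0 (τ x0) x)
  · have o1 := arc_mono p q x0 (τ x0) x y a b hx0 hy0 hx hy hsame.1 hsame.2 ar1.2.2.1 ar2.2.2.1
    have o2 := arc_mono p q x0 (τ x0) x y b c hx0 hy0 hx hy (hsame.1.symm.trans ar1.1)
      (hsame.2.symm.trans ar1.2.1) ar2.2.2.1 ar3.2.2.1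
    have o3 := arc_mono p q x0 (τ x0) x y c d hx0 hy0 hx hy
      (ar3.1.trans (hsame.1.trans ar2.1)) (ar3.2.1.trans (hsame.2.trans ar2.2.1)) ar3.2.2.1
      ar4.2.2.1
    have o4 := arc_mono p q x0 (τ x0) x y d a hx0 hy0 hx hy
      (hsame.1.trans ar2.1).symm (hsame.2.trans ar2.2.1).symm ar4.2.2.1 ar1.2.2.1
    clear ar1 ar2 ar3 ar4 hsame
    generalize posA p q x y a = a1 at *
    generalize posA p q x y b = b1 at *
    generalize posA p q x y c = c1 at *
    generalize posA p q x y d = d1 at *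
    generalize posA p q x0 (τ x0) a = a0 at *
    generalize posA p q x0 (τ x0) b = b0 at *
    generalize posA p q x0 (τ x0) c = c0 at *
    generalize posA p q x0 (τ x0) d = d0 at *
    rcases hc1 with hc1 | hc1 | hc1 | hc1 <;> omega
  · have la := arc_loc p q x0 (τ x0) x y a hx0 hy0 hx hy ar1.2.2.1
    have lb := arc_loc p q x0 (τ x0) x y b hx0 hy0 hx hy ar2.2.2.1
    have lc := arc_loc p q x0 (τ x0) x y c hx0 hy0 hx hy ar3.2.2.1
    have ld := arc_loc p q x0 (τ x0) x y d hx0 hy0 hx hy ar4.2.2.1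
    have ba := (posA_ext p q x0 (τ x0) a hx0 hy0).2
    have bb := (posA_ext p q x0 (τ x0) b hx0 hy0).2
    clear hc2 hc3 m1 m2 m3 m4 m5 m6
    generalize posA p q x y a = a1 at *
    generalize posA p q x y b = b1 at *
    generalize posA p q x y c = c1 at *
    generalize posA p q x y d = d1 at *
    generalize posA p q x y x0 = x1 at *
    generalize posA p q x y (τ x0) = y1 at *
    generalize posA p q x0 (τ x0) a = a0 at *
    generalize posA p q x0 (τ x0) b = b0 at *
    generalize posA p q x0 (τ x0) c = c0 at *
    generalize posA p q x0 (τ x0) d = d0 at *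
    generalize posA p q x0 (τ x0) x = X at *
    generalize posA p q x0 (τ x0) y = Y at *
    rcases lt_or_ge a0 Y with h1 | h1 <;> rcases lt_or_gt_of_ne ar1.2.2.1 with h2 | h2 <;>
    rcases lt_or_ge b0 Y with h3 | h3 <;> rcases lt_or_gt_of_ne ar2.2.2.1 with h4 | h4 <;>
    rcases hc1 with hc1 | hc1 | hc1 | hc1 <;> omega

theorem sc_self {α : Type*} (f : Equiv.Perm α) (a : α) : f.SameCycle a (f a) := ⟨1, by simp⟩

theorem ac1_of (p q : ℕ) (τ : Equiv.Perm (Fin (p + q))) (x0 y0 : Fin (p + q))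
    (hx : (x0 : ℕ) < p) (hy : p ≤ (y0 : ℕ)) {a b c d : Fin (p + q)}
    (hc : Cyc4 (posA p q x0 y0) a b c d)
    (hD : ((a : ℕ) < p ∧ (b : ℕ) < p ∧ (c : ℕ) < p ∧ (d : ℕ) < p) ∨
      (p ≤ (a : ℕ) ∧ p ≤ (b : ℕ) ∧ p ≤ (c : ℕ) ∧ p ≤ (d : ℕ)))
    (hac : τ.SameCycle a c) (hbd : τ.SameCycle b d) (hab : ¬ τ.SameCycle a b) :
    AC1 p q τ := by
  have hinj := posA_inj p q x0 y0 hx hy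
  have ne : ∀ u v : Fin (p + q), posA p q x0 y0 u ≠ posA p q x0 y0 v → u ≠ v := by
    rintro u v h rfl; exact h rfl
  have n1 : a ≠ b := ne _ _ (by unfold Cyc4 at hc; omega)
  have n2 : a ≠ c := ne _ _ (by unfold Cyc4 at hc; omega)
  have n3 : a ≠ d := ne _ _ (by unfold Cyc4 at hc; omega)
  have n4 : b ≠ c := ne _ _ (by unfold Cyc4 at hc; omega)
  have n5 : b ≠ d := ne _ _ (by unfold Cyc4 at hc; omega)
  have n6 : c ≠ d := ne _ _ (by unfold Cyc4 at hc; omega)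
  refine ⟨a, b, c, d, by simp [*], ?_, ?_⟩
  · rcases hD with ⟨h1, h2, h3, h4⟩ | ⟨h1, h2, h3, h4⟩
    · exact mapsCyc4_of_cyc hinj.injOn (rotOn_ann_ext p q x0 y0 hx hy) h1 h2 h3 h4 hc
    · exact mapsCyc4_of_cyc hinj.injOn (rotOn_ann_int p q x0 y0 hx hy) h1 h2 h3 h4 hc
  · have s1 : MapsSwap τ {a, b, c, d} a c := by
      refine mapsSwap_of τ _ (by simp) (by simp) hac n2 ?_
      rintro u (rfl | rfl | rfl | rfl) hu
      · simp
      · exact absurd hu hab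
      · simp
      · exact absurd (hu.trans hbd.symm) hab
    have s2 : MapsSwap τ {a, b, c, d} b d := by
      refine mapsSwap_of τ _ (by simp) (by simp) hbd n5 ?_
      rintro u (rfl | rfl | rfl | rfl) hu
      · exact absurd hu.symm hab
      · simp
      · exact absurd (hac.trans hu.symm) hab
      · simp
    exact ⟨s1.1, s1.2, s2.1, s2.2⟩

theorem ac2_of (p q : ℕ) (τ : Equiv.Perm (Fin (p + q))) (x y : Fin (p + q))
    (hx : (x : ℕ) < p) (hy : p ≤ (y : ℕ)) {z w : Fin (p + q)}
    (hc : Cyc3 (posA p q x y) z w (τ z))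
    (hzw : τ.SameCycle z w) (hxy : τ.SameCycle x y) (hxz : ¬ τ.SameCycle x z) :
    AC2 p q τ := by
  have hinj := posA_inj p q x y hx hy
  have hzz : τ.SameCycle z (τ z) := sc_self τ _
  have ne : ∀ u v : Fin (p + q), posA p q x y u ≠ posA p q x y v → u ≠ v := by
    rintro u v h rfl; exact h rfl
  have n1 : z ≠ w := ne _ _ (by unfold Cyc3 at hc; omega)
  have n2 : z ≠ τ z := ne _ _ (by unfold Cyc3 at hc; omega)
  have n3 : w ≠ τ z := ne _ _ (by unfold Cyc3 at hc; omega)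
  have hne : ∀ u, τ.SameCycle z u → u ≠ x ∧ u ≠ y := by
    refine fun u hu => ⟨?_, ?_⟩
    · rintro rfl; exact hxz hu.symm
    · rintro rfl; exact hxz (hxy.trans hu.symm)
  have e1 := hne z (Equiv.Perm.SameCycle.refl _ _)
  have e2 := hne w hzw
  have e3 := hne _ hzz
  have n4 : x ≠ y := by rintro rfl; omega
  refine ⟨z, w, τ z, x, y, ?_, hx, hy, ?_, ?_, ?_⟩
  · simp only [List.pairwise_cons, List.mem_cons, List.not_mem_nil, or_false, forall_eq_or_imp,
      forall_eq]
    exact ⟨⟨n1, n2, e1⟩, ⟨n3, e2⟩, e3, n4, by simp⟩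
  · exact mapsCyc3_of_cyc hinj.injOn (rotOn_lam p q x y hx hy) e1 e2 e3 hc
  · refine mapsCyc3_of τ _ (by simp) (by simp) (by simp) hzw n2 (Ne.symm n1) n3 ?_
    intro u hu hs
    have := hne u hs
    simp only [Set.mem_insert_iff, Set.mem_singleton_iff] at hu
    tauto
  · refine mapsSwap_of τ _ (by simp) (by simp) hxy n4 ?_
    intro u hu hs
    have h1 : u ≠ z := by rintro rfl; exact hxz hs
    have h2 : u ≠ w := by rintro rfl; exact hxz (hs.trans hzw.symm)
    have h3 : u ≠ τ z := by rintro rfl; exact hxz (hs.trans hzz.symm)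
    simp only [Set.mem_insert_iff, Set.mem_singleton_iff] at hu
    tauto

theorem ac3_of (p q : ℕ) (τ : Equiv.Perm (Fin (p + q))) (x y : Fin (p + q))
    (hx : (x : ℕ) < p) (hy : p ≤ (y : ℕ)) {a b c d : Fin (p + q)}
    (hc : Cyc4 (posA p q x y) a b c d)
    (hac : τ.SameCycle a c) (hbd : τ.SameCycle b d) (hab : ¬ τ.SameCycle a b)
    (hxy : τ.SameCycle x y) (hxa : ¬ τ.SameCycle x a) (hxb : ¬ τ.SameCycle x b) :
    AC3 p q τ := by
  have hinj := posA_inj p q x y hx hy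
  have ne : ∀ u v : Fin (p + q), posA p q x y u ≠ posA p q x y v → u ≠ v := by
    rintro u v h rfl; exact h rfl
  have n1 : a ≠ b := ne _ _ (by unfold Cyc4 at hc; omega)
  have n2 : a ≠ c := ne _ _ (by unfold Cyc4 at hc; omega)
  have n3 : a ≠ d := ne _ _ (by unfold Cyc4 at hc; omega)
  have n4 : b ≠ c := ne _ _ (by unfold Cyc4 at hc; omega)
  have n5 : b ≠ d := ne _ _ (by unfold Cyc4 at hc; omega)
  have n6 : c ≠ d := ne _ _ (by unfold Cyc4 at hc; omega)
  have n7 : x ≠ y := by rintro rfl; omega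
  have hne : ∀ u, ¬ τ.SameCycle x u → u ≠ x ∧ u ≠ y := by
    refine fun u hu => ⟨?_, ?_⟩
    · rintro rfl; exact hu (Equiv.Perm.SameCycle.refl _ _)
    · rintro rfl; exact hu hxy
  have ea := hne a hxa
  have eb := hne b hxb
  have ec := hne c fun h => hxa (h.trans hac.symm)
  have ed := hne d fun h => hxb (h.trans hbd.symm)
  refine ⟨a, b, c, d, x, y, ?_, hx, hy, ?_, ?_, ?_⟩
  · simp only [List.pairwise_cons, List.mem_cons, List.not_mem_nil, or_false, forall_eq_or_imp,
      forall_eq]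
    exact ⟨⟨n1, n2, n3, ea⟩, ⟨n4, n5, eb⟩, ⟨n6, ec⟩, ed, n7, by simp⟩
  · exact mapsCyc4_of_cyc hinj.injOn (rotOn_lam p q x y hx hy) ea eb ec ed hc
  · have s1 : MapsSwap τ {a, b, c, d, x, y} a c := by
      refine mapsSwap_of τ _ (by simp) (by simp) hac n2 ?_
      rintro u (rfl | rfl | rfl | rfl | rfl | rfl) hu
      · simp
      · exact absurd hu hab
      · simp
      · exact absurd (hu.trans hbd.symm) hab
      · exact absurd hu.symm hxa
      · exact absurd (hxy.trans hu.symm) hxa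
    have s2 : MapsSwap τ {a, b, c, d, x, y} b d := by
      refine mapsSwap_of τ _ (by simp) (by simp) hbd n5 ?_
      rintro u (rfl | rfl | rfl | rfl | rfl | rfl) hu
      · exact absurd hu.symm hab
      · simp
      · exact absurd (hac.trans hu.symm) hab
      · simp
      · exact absurd hu.symm hxb
      · exact absurd (hxy.trans hu.symm) hxb
    exact ⟨s1.1, s1.2, s2.1, s2.2⟩
  · refine mapsSwap_of τ _ (by simp) (by simp) hxy n7 ?_
    rintro u (rfl | rfl | rfl | rfl | rfl | rfl) hu
    · exact absurd hu hxa
    · exact absurd hu hxb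
    · exact absurd (hu.trans hac.symm) hxa
    · exact absurd (hu.trans hbd.symm) hxb
    · simp
    · simp

theorem induced_one {α : Type*} [Finite α] (f : Equiv.Perm α) (S : Set α) {a : α} (ha : a ∈ S)
    (h : f a ∈ S) : induced f S a = f a := by
  obtain ⟨k, hk, hk1, -, hmin⟩ := induced_spec f S ha
  rw [← hk1]
  by_cases h1 : k = 1
  · rw [h1]; rfl
  · exact absurd h (hmin 1 (by omega) (by omega))

theorem induced_last {α : Type*} [Finite α] (f : Equiv.Perm α) (S : Set α) {a : α} (ha : a ∈ S)
    (h : f a ∉ S) : ∃ b, f.SameCycle a b ∧ b ∉ S ∧ f b ∈ S ∧ induced f S a = f b := by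
  obtain ⟨k, hk, hk1, hk2, hmin⟩ := induced_spec f S ha
  obtain ⟨j, rfl⟩ : ∃ j, k = j + 1 := ⟨k - 1, by omega⟩
  have hj : j ≠ 0 := by rintro rfl; exact h hk2
  rw [Function.iterate_succ_apply'] at hk1 hk2
  refine ⟨f^[j] a, ?_, hmin j (by omega) (by omega), hk2, hk1.symm⟩
  rw [← Equiv.Perm.coe_pow]
  exact ⟨j, by rw [zpow_natCast]⟩

/-- For a standard permutation the orbit of the exit `x0` is traversed in order. -/
theorem std_next (p q : ℕ) (τ : Equiv.Perm (Fin (p + q))) (hstd : AnnStandard p q τ)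
    (x0 : Fin (p + q)) (hx : (x0 : ℕ) < p) (hy : p ≤ (τ x0 : ℕ)) {z w : Fin (p + q)}
    (hz : τ.SameCycle x0 z) (hw : τ.SameCycle x0 w) :
    ¬ CI (posA p q x0 (τ x0)) z (τ z) w := by
  intro hci
  have hinj := posA_inj p q x0 (τ x0) hx hy
  have hext := fun i => posA_ext p q x0 (τ x0) i hx hy
  have hxy := posA_x p q x0 (τ x0) hx hy
  set A : Set (Fin (p + q)) := {b | τ.SameCycle x0 b} with hA
  have hOA : IsOrbit τ A := ⟨x0, rfl⟩
  have hx0A : x0 ∈ A := Equiv.Perm.SameCycle.refl _ _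
  have hy0A : τ x0 ∈ A := sc_self τ x0
  have hτz : τ z ∈ A := by
    change τ.SameCycle x0 (τ z)
    simpa using hz
  obtain ⟨⟨e, -, he⟩, ⟨g, -, hg⟩⟩ := hstd.2 A hOA ⟨x0, hx0A, hx⟩ ⟨τ x0, hy0A, hy⟩
  have nE : ∀ u ∈ A ∩ extSet p q, IsNext (posA p q x0 (τ x0)) (A ∩ extSet p q) u
      (induced τ (A ∩ extSet p q) u) := by
    intro u hu
    rw [(hstd.1 A hOA).1 u hu]
    have := induced_isNext hinj.injOn (rotOn_ext p q x0 (τ x0) hx hy) (A ∩ extSet p q) hu hu.2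
    rwa [Set.inter_eq_left.2 Set.inter_subset_right] at this
  have nI : ∀ u ∈ A ∩ intSet p q, IsNext (posA p q x0 (τ x0)) (A ∩ intSet p q) u
      (induced τ (A ∩ intSet p q) u) := by
    intro u hu
    rw [(hstd.1 A hOA).2 u hu]
    have := induced_isNext hinj.injOn (rotOn_int p q x0 (τ x0) hx hy) (A ∩ intSet p q) hu hu.2
    rwa [Set.inter_eq_left.2 Set.inter_subset_right] at this
  have uE : ∀ u, u ∈ A → (u : ℕ) < p → p ≤ (τ u : ℕ) → u = x0 := fun u h1 h2 h3 =>
    (he u ⟨⟨h1, h2⟩, h3⟩).trans (he x0 ⟨⟨hx0A, hx⟩, hy⟩).symm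
  have bz := hext z
  have bt := hext (τ z)
  have bw := hext w
  by_cases hzx : z = x0
  · subst hzx
    unfold CI at hci
    omega
  have pzx : posA p q x0 (τ x0) z ≠ posA p q x0 (τ x0) x0 := fun e => hzx (hinj e)
  have ptx : posA p q x0 (τ x0) (τ z) ≠ posA p q x0 (τ x0) (τ x0) :=
    fun e => hzx (τ.injective (hinj e))
  by_cases hzE : (z : ℕ) < p
  · have htE : (τ z : ℕ) < p := by
      by_contra h
      exact hzx (uE z hz hzE (by omega))
    have h1 := nE z ⟨hz, hzE⟩
    rw [induced_one τ (A ∩ extSet p q) ⟨hz, hzE⟩ ⟨hτz, htE⟩] at h1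
    have h2 := h1.2.1 x0 ⟨hx0A, hx⟩
    by_cases hwE : (w : ℕ) < p
    · exact h1.2.1 w ⟨hw, hwE⟩ hci
    · unfold CI at h2 hci
      omega
  · push Not at hzE
    by_cases htE : (τ z : ℕ) < p
    · have uI : ∀ u, u ∈ A → p ≤ (u : ℕ) → (τ u : ℕ) < p → u = z := fun u h1 h2 h3 =>
        (hg u ⟨⟨h1, h2⟩, h3⟩).trans (hg z ⟨⟨hz, hzE⟩, htE⟩).symm
      by_cases hwE : (w : ℕ) < p
      · have h1 := nE x0 ⟨hx0A, hx⟩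
        obtain ⟨b, hb1, hb2, hb3, hb4⟩ := induced_last τ (A ∩ extSet p q) (a := x0) ⟨hx0A, hx⟩
          (fun h => absurd (show (τ x0 : ℕ) < p from h.2) (by omega))
        have hb : b = z := uI b hb1 (by
          by_contra h
          exact hb2 ⟨hb1, show (b : ℕ) < p by omega⟩) hb3.2
        rw [hb4, hb] at h1
        have h2 := h1.2.1 w ⟨hw, hwE⟩
        by_cases h3 : τ z = x0
        · have h4 := h1.2.2 h3 w ⟨hw, hwE⟩
          rw [h4, h3] at hci
          unfold CI at hci
          omega
        · have h4 : posA p q x0 (τ x0) (τ z) ≠ posA p q x0 (τ x0) x0 := fun e => h3 (hinj e)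
          unfold CI at h2 hci
          omega
      · push Not at hwE
        have h1 := nI z ⟨hz, hzE⟩
        obtain ⟨b, hb1, hb2, hb3, hb4⟩ := induced_last τ (A ∩ intSet p q) (a := z) ⟨hz, hzE⟩
          (fun h => absurd (show p ≤ (τ z : ℕ) from h.2) (by omega))
        have hbA : b ∈ A := hz.trans hb1
        have hb : b = x0 := uE b hbA (by
          by_contra h
          exact hb2 ⟨hbA, show p ≤ (b : ℕ) by omega⟩) hb3.2
        rw [hb4, hb] at h1
        have h2 := h1.2.1 w ⟨hw, hwE⟩
        by_cases h3 : τ x0 = z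
        · have h4 := h1.2.2 h3 w ⟨hw, hwE⟩
          rw [h4] at hci
          unfold CI at hci
          omega
        · have h4 : posA p q x0 (τ x0) (τ x0) ≠ posA p q x0 (τ x0) z := fun e => h3 (hinj e)
          unfold CI at h2 hci
          omega
    · push Not at htE
      have h1 := nI z ⟨hz, hzE⟩
      rw [induced_one τ (A ∩ intSet p q) ⟨hz, hzE⟩ ⟨hτz, htE⟩] at h1
      have h2 := h1.2.1 (τ x0) ⟨hy0A, hy⟩
      by_cases hwE : (w : ℕ) < p
      · unfold CI at h2 hci
        omega
      · exact h1.2.1 w ⟨hw, by push Not at hwE; exact hwE⟩ hci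

/-- A crossing with the orbit of the exit `x0`. -/
theorem cross_exit (p q : ℕ) (τ : Equiv.Perm (Fin (p + q))) (h1 : ¬ AC1 p q τ) (h2 : ¬ AC2 p q τ)
    (x0 : Fin (p + q)) (hx : (x0 : ℕ) < p) (hy : p ≤ (τ x0 : ℕ)) {a b d : Fin (p + q)}
    (ha : τ.SameCycle x0 a) (hbd : τ.SameCycle b d) (hb : ¬ τ.SameCycle x0 b)
    (hba : posA p q x0 (τ x0) b < posA p q x0 (τ x0) a)
    (had : posA p q x0 (τ x0) a < posA p q x0 (τ x0) d) : False := by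
  have hinj := posA_inj p q x0 (τ x0) hx hy
  have hext := fun i => posA_ext p q x0 (τ x0) i hx hy
  have hxy := posA_x p q x0 (τ x0) hx hy
  have hy0 : τ.SameCycle x0 (τ x0) := sc_self τ _
  have hd : ¬ τ.SameCycle x0 d := fun h => hb (h.trans hbd.symm)
  have ea := hext a
  have eb := hext b
  have ed := hext d
  have nd : posA p q x0 (τ x0) d ≠ posA p q x0 (τ x0) x0 := by
    intro e; rw [hinj e] at hd; exact hd (Equiv.Perm.SameCycle.refl _ _)
  have nb : posA p q x0 (τ x0) b ≠ posA p q x0 (τ x0) (τ x0) := by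
    intro e; rw [hinj e] at hb; exact hb hy0
  by_cases hbE : (b : ℕ) < p
  · refine h1 (ac1_of p q τ x0 (τ x0) hx hy (a := b) (b := a) (c := d) (d := x0) ?_ ?_ hbd ha.symm
      fun h => hb (ha.trans h.symm))
    · unfold Cyc4; omega
    · left; omega
  · by_cases hdE : (d : ℕ) < p
    · push Not at hbE
      refine h2 (ac2_of p q τ d b hdE hbE (z := x0) (w := a) ?_ ha hbd.symm fun h => hd h.symm)
      have a1 := posA_spec p q x0 (τ x0) a hx hy
      have a2 := posA_spec p q x0 (τ x0) b hx hy
      have a3 := posA_spec p q x0 (τ x0) d hx hy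
      have a4 := posA_spec p q d b a hdE hbE
      have a5 := posA_spec p q d b x0 hdE hbE
      have a6 := posA_spec p q d b (τ x0) hdE hbE
      have := (τ x0).2
      have := a.2
      have := b.2
      unfold Cyc3
      omega
    · refine h1 (ac1_of p q τ x0 (τ x0) hx hy (a := τ x0) (b := b) (c := a) (d := d) ?_ ?_
        (hy0.symm.trans ha) hbd fun h => hb (hy0.trans h))
      · unfold Cyc4; omega
      · right; omega

theorem cross_exit' (p q : ℕ) (τ : Equiv.Perm (Fin (p + q))) (h1 : ¬ AC1 p q τ) (h2 : ¬ AC2 p q τ)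
    (x0 : Fin (p + q)) (hx : (x0 : ℕ) < p) (hy : p ≤ (τ x0 : ℕ)) {a b c d : Fin (p + q)}
    (ha : τ.SameCycle x0 a) (hac : τ.SameCycle a c) (hbd : τ.SameCycle b d)
    (hab : ¬ τ.SameCycle a b) (hc : Cyc4 (posA p q x0 (τ x0)) a b c d) : False := by
  have hb : ¬ τ.SameCycle x0 b := fun h => hab (ha.symm.trans h)
  have hd : ¬ τ.SameCycle x0 d := fun h => hb (h.trans hbd.symm)
  unfold Cyc4 at hc
  rcases hc with h | h | h | h
  · exact cross_exit p q τ h1 h2 x0 hx hy (ha.trans hac) hbd hb h.2.1 h.2.2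
  · exact cross_exit p q τ h1 h2 x0 hx hy (ha.trans hac) hbd hb h.1 h.2.1
  · exact cross_exit p q τ h1 h2 x0 hx hy ha hbd.symm hd h.2.1 h.2.2
  · exact cross_exit p q τ h1 h2 x0 hx hy ha hbd.symm hd h.1 h.2.1

theorem ncs_of_ann (p q : ℕ) (τ : Equiv.Perm (Fin (p + q))) (h : AnnNC p q τ)
    (x0 : Fin (p + q)) (hx : (x0 : ℕ) < p) (hy : p ≤ (τ x0 : ℕ)) :
    NCs (posA p q x0 (τ x0)) τ := by
  obtain ⟨hstd, h1, h2, h3⟩ := h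
  have hinj := posA_inj p q x0 (τ x0) hx hy
  have hy0 : τ.SameCycle x0 (τ x0) := sc_self τ _
  intro z w hc
  by_contra hc'
  have hzz : τ.SameCycle z (τ z) := sc_self τ _
  have hww : τ.SameCycle w (τ w) := sc_self τ _
  by_cases hzw : τ.SameCycle z w
  · by_cases hxz : τ.SameCycle x0 z
    · exact std_next p q τ hstd x0 hx hy hxz (hxz.trans hzw) hc
    · refine h2 (ac2_of p q τ x0 (τ x0) hx hy ?_ hzw hy0 hxz)
      unfold CI at hc
      unfold Cyc3
      omega
  · have n1 : posA p q x0 (τ x0) (τ w) ≠ posA p q x0 (τ x0) z := by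
      intro e
      rw [hinj e] at hww
      exact hzw hww.symm
    have n2 : posA p q x0 (τ x0) (τ w) ≠ posA p q x0 (τ x0) (τ z) := by
      intro e
      rw [hinj e] at hww
      exact hzw (hzz.trans hww.symm)
    have hc4 : Cyc4 (posA p q x0 (τ x0)) z w (τ z) (τ w) := by
      unfold CI at hc hc'
      unfold Cyc4
      omega
    by_cases hxz : τ.SameCycle x0 z
    · exact cross_exit' p q τ h1 h2 x0 hx hy hxz hzz hww hzw hc4
    by_cases hxw : τ.SameCycle x0 w
    · refine cross_exit' p q τ h1 h2 x0 hx hy (a := w) (b := τ z) (c := τ w) (d := z) hxw hww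
        hzz.symm (fun h => hzw (hzz.trans h.symm)) ?_
      unfold Cyc4 at hc4 ⊢
      omega
    · exact h3 (ac3_of p q τ x0 (τ x0) hx hy hc4 hzz hww hzw hy0 hxz hxw)

/-- Theorem 6.1 1°: a `(p,q)`-connected permutation `τ` of `[p+q]` satisfies
`#(τ) + #(τ⁻¹γ) ≤ p+q`, and `τ ∈ S_ann-nc(p,q)` iff this inequality is an equality. -/
theorem stmt_15 (p q : ℕ) (hp : 0 < p) (hq : 0 < q)
    (τ : Equiv.Perm (Fin (p + q))) (hconn : AnnConnected p q τ) :
    numOrbits τ + numOrbits (τ⁻¹ * gammaAnn p q) ≤ p + q ∧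
      (AnnNC p q τ ↔ numOrbits τ + numOrbits (τ⁻¹ * gammaAnn p q) = p + q) := by
  obtain ⟨A, ⟨e, rfl⟩, ⟨u, hu1, hu2⟩, ⟨v, hv1, hv2⟩⟩ := hconn
  have huv : τ.SameCycle u v := Equiv.Perm.SameCycle.trans (Equiv.Perm.SameCycle.symm hu1) hv1
  obtain ⟨x0, -, hx, hy⟩ := exists_exit p q τ hu2 hv2 huv
  have hcore := ann_core p q τ x0 hx hy
  refine ⟨hcore.1, fun h => hcore.2.2 (ncs_of_ann p q τ h x0 hx hy), fun h => ?_⟩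
  have hnc : ∀ x : Fin (p + q), (x : ℕ) < p → p ≤ (τ x : ℕ) → NCs (posA p q x (τ x)) τ :=
    fun x h1 h2 => (ann_core p q τ x h1 h2).2.1 h
  exact ⟨standard_of_ncs p q τ x0 (τ x0) hx hy (hnc x0 hx hy),
    not_AC1_of_ncs p q τ x0 (τ x0) hx hy (hnc x0 hx hy), not_AC2_of_ncs p q τ hnc,
    not_AC3_of_ncs p q τ hnc⟩
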